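/- arXiv:2107.03259 — 3 statements merged into one kernel-verified Lean document; each statement's English description precedes it below -/
import Mathlib

section
/- Let d ≥ 5, r ≤ R ∈ N, D = {y ∈ 10rZ^d : B(y,r) ∩ B(2R) ≠ ∅}, and ζ_y = 1[T_{B(y,r)} < ∞] for a simple random walk started at z ∈ B(R). Then there exists C < ∞ such that E_z[ Σ_{y∈D} Σ_{y'∈D, y'≠y} ζ_y·ζ_{y'}·|y−y'|^{2−d} ] ≤ C·(R/r)²·r^{2−d}. -/
open MeasureTheory ENNReal Filter

noncomputable section

abbrev Zd (d : ℕ) := Fin d → ℤ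

def supNorm {d : ℕ} (x : Zd d) : ℕ := Finset.univ.sup fun i => (x i).natAbs

def IsNbr {d : ℕ} (x y : Zd d) : Prop := (∑ i, |x i - y i|) = 1

def stepVec {d : ℕ} (p : Fin d × Bool) : Zd d :=
  fun j => if j = p.1 then (if p.2 then 1 else -1) else 0

def nbrs {d : ℕ} (y : Zd d) : Finset (Zd d) :=
  Finset.univ.image fun p : Fin d × Bool => y + stepVec p

/-- A family of measures which is a simple random walk on `ℤ^d` started at `x`. -/
structure SRW (d : ℕ) where
  P : Zd d → Measure (ℕ → Zd d)
  isProb : ∀ x, IsProbabilityMeasure (P x)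
  start : ∀ x, P x {ω | ω 0 = x} = 1
  nn : ∀ x, P x {ω | ∀ t, IsNbr (ω t) (ω (t+1))} = 1
  cyl : ∀ (x : Zd d) (n : ℕ) (γ : ℕ → Zd d), γ 0 = x →
      (∀ t < n, IsNbr (γ t) (γ (t+1))) →
      P x {ω | ∀ t ≤ n, ω t = γ t} = (((2 * d : ℕ) : ℝ≥0∞))⁻¹ ^ n

def HitBy {d : ℕ} (K : Set (Zd d)) (ℓ : ℕ) : Set (ℕ → Zd d) := {ω | ∃ t ≤ ℓ, ω t ∈ K}

def Hits {d : ℕ} (K : Set (Zd d)) : Set (ℕ → Zd d) := {ω | ∃ t, ω t ∈ K}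

def nPaths (d : ℕ) : ℕ → Zd d → Zd d → ℕ
  | 0, x, y => if x = y then 1 else 0
  | t+1, x, y => ∑ z ∈ nbrs y, nPaths d t x z

def pKer (d t : ℕ) (x y : Zd d) : ℝ≥0∞ := (nPaths d t x y : ℝ≥0∞) / ((2*d : ℕ) : ℝ≥0∞)^t

def green (d : ℕ) (x y : Zd d) : ℝ≥0∞ := ∑' t, pKer d t x y

def nAvoid {d : ℕ} (K : Finset (Zd d)) : ℕ → Zd d → ℕ
  | 0, _ => 1
  | t+1, x => ∑ z ∈ (nbrs x).filter (fun z => z ∉ K), nAvoid K t z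

def escProb {d : ℕ} (K : Finset (Zd d)) (x : Zd d) : ℝ≥0∞ :=
  ⨅ n, (nAvoid K n x : ℝ≥0∞) / ((2*d : ℕ) : ℝ≥0∞)^n

def cap {d : ℕ} (K : Finset (Zd d)) : ℝ≥0∞ := ∑ x ∈ K, escProb K x

def ConnIn {d : ℕ} (S : Set (Zd d)) (x y : Zd d) : Prop :=
  ∃ (n : ℕ) (γ : ℕ → Zd d), γ 0 = x ∧ γ n = y ∧ (∀ t < n, IsNbr (γ t) (γ (t+1))) ∧ ∀ t ≤ n, γ t ∈ S

def PercSet {d : ℕ} (S : Set (Zd d)) : Prop := ∃ x ∈ S, {y | ConnIn S x y}.Infinite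

def IsAnimal {d : ℕ} (H : Finset (Zd d)) : Prop :=
  (0 : Zd d) ∈ H ∧ ∀ x ∈ H, ∀ y ∈ H, ConnIn (H : Set (Zd d)) x y

abbrev Animal (d : ℕ) := {H : Finset (Zd d) // IsAnimal H}

def zooTrace {d : ℕ} {Ω : Type*} (N : Zd d × Animal d → Ω → ℕ) (ω : Ω) : Set (Zd d) :=
  {z | ∃ p : Zd d × Animal d, 1 ≤ N p ω ∧ z - p.1 ∈ p.2.1}

def poissonProb (lam : ℝ) (k : ℕ) : ℝ≥0∞ :=
  ENNReal.ofReal (Real.exp (-lam) * lam ^ k / (Nat.factorial k))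

def cluster {d : ℕ} (S : Set (Zd d)) (x : Zd d) : Set (Zd d) := {y | x ∈ S ∧ ConnIn S x y}

def closF {d : ℕ} (H : Finset (Zd d)) : Finset (Zd d) := H ∪ H.biUnion nbrs


abbrev Worm (d : ℕ) := Σ n : ℕ, (Zd d × (Fin n → Fin d × Bool))

def wormLen {d : ℕ} (w : Worm d) : ℕ := w.1 + 1

def IsBernoulliSite {d : ℕ} (P : Measure (Zd d → Bool)) (p : ℝ≥0∞) : Prop :=
  ∀ A B : Finset (Zd d), Disjoint A B →
    P {η | (∀ a ∈ A, η a = true) ∧ ∀ b ∈ B, η b = false} = p ^ A.card * (1 - p) ^ B.card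

/-- The critical probability of Bernoulli site percolation on `ℤ^d`. -/
def pcSite (d : ℕ) : ℝ≥0∞ :=
  sInf {p | ∀ P : Measure (Zd d → Bool), IsProbabilityMeasure P → IsBernoulliSite P p →
    P {η | PercSet {x | η x = true}} = 1}

open Classical in
/-- The Grimmett–Marstrand exploration process: given an ordering `emb` of the (directed)
nearest-neighbour edges and outcomes `b t`, produce the pair (good set, bad set) at step `t`. -/
def explore {d : ℕ} (emb : (Zd d × Zd d) ↪ ℕ) (b : ℕ → Bool) : ℕ → Finset (Zd d) × Finset (Zd d)
  | 0 => if b 0 then ({0}, ∅) else (∅, {0})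
  | t+1 =>
    let G := (explore emb b t).1
    let B := (explore emb b t).2
    let cand : Finset (Zd d × Zd d) :=
      G.biUnion fun u => ((nbrs u).filter fun w => w ∉ G ∧ w ∉ B).image fun w => (u, w)
    if h : cand.Nonempty then
      let e := (Finset.exists_min_image cand (fun p => emb p) h).choose
      if b (t+1) then (insert e.2 G, B) else (G, insert e.2 B)
    else (G, B)

/-- Mutual Dirichlet energy of two measures on `ℤ^d` w.r.t. the random-walk Green function. -/
def energy (d : ℕ) (μ₁ μ₂ : Zd d → ℝ≥0∞) : ℝ≥0∞ :=
  ∑' x, ∑' y, green d x y * μ₁ x * μ₂ y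

lemma wp_taylor (p : ℝ) : ∃ c δ : ℝ, 0 ≤ c ∧ 0 < δ ∧ δ ≤ 1/2 ∧ ∀ u : ℝ, |u| ≤ δ →
    (1 + u) ^ (-p) ≤ 1 - p * u + p * (p+1) / 2 * u^2 - p * (p+1) * (p+2) / 6 * u^3 + c * u^4 := by
  have h := (Real.one_add_rpow_hasFPowerSeriesAt_zero (a := -p)).isBigO_sub_partialSum_pow 4
  obtain ⟨c, hc0, hc⟩ := h.exists_nonneg
  rw [Asymptotics.IsBigOWith, Metric.eventually_nhds_iff] at hc
  obtain ⟨ε, hε, H⟩ := hc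
  refine ⟨c, min (1/2) (ε/2), hc0, by positivity, min_le_left _ _, fun u hu => ?_⟩
  have h1 : |u| < ε := by
    have := min_le_right (1/2) (ε/2)
    linarith
  have h2 := H (y := u) (by simpa [Real.dist_eq] using h1)
  have e : (binomialSeries ℝ (-p)).partialSum 4 u = 1 - p * u + p * (p+1) / 2 * u^2 - p * (p+1) * (p+2) / 6 * u^3 := by
    simp only [FormalMultilinearSeries.partialSum, Finset.sum_range_succ, binomialSeries_apply, Ring.choose_eq_smul, descPochhammer_succ_right, descPochhammer_zero, Polynomial.smeval_eq_sum, Finset.range_zero, Finset.sum_empty]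
    have h2 : Polynomial.smeval (2 : Polynomial ℤ) (-p) = 2 := by
      have := Polynomial.smeval_natCast ℤ (-p) 2
      simpa using this
    simp [Polynomial.smeval_mul, Polynomial.smeval_sub, Nat.factorial, ← Polynomial.smeval_eq_sum, h2]
    ring
  rw [e] at h2
  simp only [zero_add, norm_pow, Real.norm_eq_abs, abs_abs] at h2
  have h3 : |u|^4 = u^4 := by rw [show (4:ℕ) = 2*2 by norm_num, pow_mul, sq_abs, pow_mul]
  rw [h3] at h2
  have := (abs_le.mp h2).2
  linarith

lemma wp_pair {p c δ s v : ℝ} (hp : 0 < p) (hc : 0 ≤ c) (hδ : 0 < δ) (hδ2 : δ ≤ 1/2)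
    (hT : ∀ u : ℝ, |u| ≤ δ →
    (1 + u) ^ (-p) ≤ 1 - p * u + p * (p+1) / 2 * u^2 - p * (p+1) * (p+2) / 6 * u^3 + c * u^4)
    (hs1 : 1 ≤ s) (hs : 9 ≤ δ^2 * s) (hv : v^2 ≤ s) :
    (s + 1 + 2 * v) ^ (-p) + (s + 1 - 2 * v) ^ (-p) ≤
      s ^ (-p) * (2 - 2 * p / s + p * (p+1) / 2 * (2 + 8 * v^2) / s^2 + 82 * c / s^2) := by
  have hs0 : 0 < s := by linarith
  have key : 1 + 2 * |v| ≤ δ * s := by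
    have h1 : |v| ≤ √s := Real.abs_le_sqrt hv
    have h2 : 1 ≤ √s := Real.one_le_sqrt.mpr hs1
    have h3 : √s * √s = s := Real.mul_self_sqrt hs0.le
    have h4 : 3 ≤ δ * √s := by
      have : (3:ℝ)^2 ≤ (δ * √s)^2 := by rw [mul_pow, Real.sq_sqrt hs0.le]; linarith
      exact le_of_sq_le_sq this (by positivity)
    nlinarith
  have hu : ∀ w : ℝ, |w| = |v| → |(1 + 2 * w) / s| ≤ δ := by
    intro w hw
    rw [abs_div, abs_of_pos hs0, div_le_iff₀ hs0]
    refine le_trans (abs_add_le _ _) ?_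
    rw [abs_mul, hw]; simpa using key
  have e : ∀ w : ℝ, |w| = |v| → (s + 1 + 2 * w) ^ (-p) = s ^ (-p) * (1 + (1 + 2 * w)/s) ^ (-p) := by
    intro w hw
    have := abs_le.mp (hu w hw)
    rw [← Real.mul_rpow hs0.le (by linarith)]
    congr 1; field_simp; ring
  have e2 := e (-v) (abs_neg v)
  rw [e v rfl, show s + 1 - 2 * v = s + 1 + 2 * (-v) by ring, e2, ← mul_add]
  have hsp : 0 ≤ s ^ (-p) := by positivity
  refine mul_le_mul_of_nonneg_left ?_ hsp
  have t1 := hT _ (hu v rfl)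
  have t2 := hT _ (hu (-v) (abs_neg v))
  refine (add_le_add t1 t2).trans ?_
  have h3 : 0 ≤ p * (p+1) * (p+2) / 6 * ((2 + 24 * v^2) / s^3) := by positivity
  have h4 : c * ((2 + 48 * v^2 + 32 * (v^2)^2) / s^4) ≤ c * (82 / s^2) := by
    refine mul_le_mul_of_nonneg_left ?_ hc
    rw [div_le_div_iff₀ (by positivity) (by positivity)]
    have : (2 + 48 * v^2 + 32 * (v^2)^2) ≤ 82 * s^2 := by nlinarith [sq_nonneg v]
    calc _ ≤ 82 * s^2 * s^2 := by gcongr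
      _ = _ := by ring
  have : (1 - p * ((1 + 2 * v) / s) + p * (p+1) / 2 * ((1 + 2 * v) / s)^2 - p * (p+1) * (p+2) / 6 * ((1 + 2 * v) / s)^3 + c * ((1 + 2 * v) / s)^4)
    + (1 - p * ((1 + 2 * -v) / s) + p * (p+1) / 2 * ((1 + 2 * -v) / s)^2 - p * (p+1) * (p+2) / 6 * ((1 + 2 * -v) / s)^3 + c * ((1 + 2 * -v) / s)^4)
    = 2 - 2 * p / s + p * (p+1) / 2 * (2 + 8 * v^2) / s^2 - p * (p+1) * (p+2) / 6 * ((2 + 24 * v^2) / s^3) + c * ((2 + 48 * v^2 + 32 * (v^2)^2) / s^4) := by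
    field_simp; ring
  rw [this]
  have : c * (82 / s^2) = 82 * c / s^2 := by ring
  linarith

lemma wp_superharm {d : ℕ} (hd : 3 ≤ d) : ∃ a : ℝ, 1 ≤ a ∧ ∀ A : ℝ, a ≤ A → ∀ x : Fin d → ℝ,
    ∑ i, (((∑ j, x j ^ 2) + A + 1 + 2 * x i) ^ (-(((d:ℝ) - 2)/2)) +
      ((∑ j, x j ^ 2) + A + 1 - 2 * x i) ^ (-(((d:ℝ) - 2)/2)))
    ≤ 2 * d * ((∑ j, x j ^ 2) + A) ^ (-(((d:ℝ) - 2)/2)) := by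
  have hd' : (3:ℝ) ≤ d := by exact_mod_cast hd
  set p : ℝ := ((d:ℝ) - 2)/2 with hp
  have hp0 : 0 < p := by rw [hp]; linarith
  obtain ⟨c, δ, hc, hδ, hδ2, hT⟩ := wp_taylor p
  refine ⟨max 1 (max (9/δ^2) (d + 82 * c * d / (p*(p+1)))), le_max_left _ _, fun A hA x => ?_⟩
  have hA1 : 1 ≤ A := (le_max_left _ _).trans hA
  have hA2 : 9/δ^2 ≤ A := ((le_max_left _ _).trans (le_max_right _ _)).trans hA
  have hA3 : d + 82 * c * d / (p*(p+1)) ≤ A := ((le_max_right _ _).trans (le_max_right _ _)).trans hA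
  have hS0 : 0 ≤ ∑ j, x j ^ 2 := Finset.sum_nonneg fun i _ => sq_nonneg _
  have hxi : ∀ i, x i ^ 2 ≤ ∑ j, x j ^ 2 := fun i =>
    Finset.single_le_sum (f := fun j => x j ^ 2) (fun i _ => sq_nonneg _) (Finset.mem_univ i)
  set S := ∑ j, x j ^ 2 with hS
  set s := S + A with hs
  have hs1 : 1 ≤ s := by linarith
  have hs0 : 0 < s := by linarith
  have hs9 : 9 ≤ δ^2 * s := by
    rw [div_le_iff₀ (by positivity)] at hA2
    nlinarith [sq_nonneg δ]
  refine (Finset.sum_le_sum fun i _ => wp_pair hp0 hc hδ hδ2 hT hs1 hs9 (by linarith [hxi i])).trans ?_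
  rw [← Finset.mul_sum, mul_comm]
  refine mul_le_mul_of_nonneg_right ?_ (by positivity)
  have e : ∑ i : Fin d, (2 - 2 * p / s + p * (p+1) / 2 * (2 + 8 * x i^2) / s^2 + 82 * c / s^2)
      = d * (2 - 2 * p / s + 82 * c / s^2) + p * (p+1) / 2 * (2 * d + 8 * S) / s^2 := by
    simp only [Finset.sum_add_distrib, ← Finset.sum_div, ← Finset.mul_sum, ← hS]
    simp
    ring
  rw [e]
  have hSs : S = s - A := by rw [hs]; ring
  have hdp : (d:ℝ) = 2 * p + 2 := by rw [hp]; ring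
  have h5 : d * (p*(p+1)) + 82 * c * d ≤ A * (p * (p+1)) := by
    have : 0 < p * (p+1) := by positivity
    have h := mul_le_mul_of_nonneg_right hA3 this.le
    rw [add_mul, div_mul_cancel₀ _ this.ne'] at h
    exact h
  have h6 : d * (2 - 2 * p / s + 82 * c / s^2) + p * (p+1) / 2 * (2 * d + 8 * S) / s^2
     = 2 * d + (d * (p*(p+1)) + 82 * c * d - 4 * (A * (p * (p+1)))) / s^2 := by
    rw [hSs, hdp]; field_simp; ring
  rw [h6]
  have : (d * (p*(p+1)) + 82 * c * d - 4 * (A * (p * (p+1)))) / s^2 ≤ 0 := by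
    apply div_nonpos_of_nonpos_of_nonneg _ (by positivity)
    have : 0 ≤ A * (p * (p+1)) := by positivity
    linarith
  linarith

/-- Markov-type bound, one target. -/
lemma wp_ext_nbr {d : ℕ} (x y : Zd d) (h : IsNbr x y) : ∃ p : Fin d × Bool, y = x + stepVec p := by
  unfold IsNbr at h
  have hex : ∃ i, x i - y i ≠ 0 := by
    by_contra hc
    push Not at hc
    simp [hc] at h
  obtain ⟨i, hi⟩ := hex
  have h1 : |x i - y i| + ∑ j ∈ Finset.univ.erase i, |x j - y j| = 1 := by
    rw [← h]; exact Finset.add_sum_erase _ (fun j => |x j - y j|) (Finset.mem_univ i)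
  have h2 : 0 ≤ ∑ j ∈ Finset.univ.erase i, |x j - y j| := Finset.sum_nonneg fun _ _ => abs_nonneg _
  have h3 : 1 ≤ |x i - y i| := Int.one_le_abs hi
  have h4 : ∑ j ∈ Finset.univ.erase i, |x j - y j| = 0 := by linarith
  have h5 : |x i - y i| = 1 := by linarith
  rw [Finset.sum_eq_zero_iff_of_nonneg (fun _ _ => abs_nonneg _)] at h4
  have h6 : ∀ j, j ≠ i → y j = x j := by
    intro j hj
    have := h4 j (by simp [hj])
    rw [abs_eq_zero] at this; linarith
  rcases (abs_eq (by norm_num)).mp h5 with h7 | h7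
  · refine ⟨(i, false), funext fun j => ?_⟩
    by_cases hj : j = i
    · subst hj; simp [stepVec]; linarith
    · simp [stepVec, hj, h6 j hj]
  · refine ⟨(i, true), funext fun j => ?_⟩
    by_cases hj : j = i
    · subst hj; simp [stepVec]; linarith
    · simp [stepVec, hj, h6 j hj]

lemma wp_nbr_step {d : ℕ} (x : Zd d) (p : Fin d × Bool) : IsNbr x (x + stepVec p) := by
  unfold IsNbr
  rw [Finset.sum_eq_single p.1]
  · simp [stepVec]; split_ifs <;> simp
  · intro j _ hj; simp [stepVec, hj]
  · simp

/-- The part of the event `E` in the cylinder of `γ` up to time `m`. -/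
def wpCyl {d : ℕ} (γ : ℕ → Zd d) (m : ℕ) : Set (ℕ → Zd d) := {ω | ∀ t ≤ m, ω t = γ t}

/-- One step decomposition. -/
lemma wp_onestep {d : ℕ} (hd : 0 < d) (W : SRW d) (z : Zd d) (E E' : Set (ℕ → Zd d)) (G : Zd d → ℝ≥0∞)
    (hG : ∀ x, ∑ p : Fin d × Bool, G (x + stepVec p) ≤ (2 * d : ℕ) * G x)
    (m : ℕ) (γ : ℕ → Zd d) (h0 : γ 0 = z) (hγ : ∀ t < m, IsNbr (γ t) (γ (t+1)))
    (hE : wpCyl γ m ∩ E ⊆ E')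
    (hrec : ∀ γ' : ℕ → Zd d, γ' 0 = z → (∀ t < m + 1, IsNbr (γ' t) (γ' (t+1))) →
      W.P z (wpCyl γ' (m+1) ∩ E') ≤ ((2 * d : ℕ) : ℝ≥0∞)⁻¹ ^ (m+1) * G (γ' (m+1))) :
    W.P z (wpCyl γ m ∩ E) ≤ ((2 * d : ℕ) : ℝ≥0∞)⁻¹ ^ m * G (γ m) := by
  have := W.isProb z
  let ext (p : Fin d × Bool) : ℕ → Zd d := Function.update γ (m+1) (γ m + stepVec p)
  have hext : ∀ p, ∀ t ≤ m, ext p t = γ t := fun p t ht => by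
    simp [ext, Function.update_of_ne (show t ≠ m+1 by omega)]
  have hext1 : ∀ p, ext p (m+1) = γ m + stepVec p := fun p => by simp [ext]
  have hnull : W.P z {ω | ∀ t, IsNbr (ω t) (ω (t+1))}ᶜ = 0 := by
    rw [prob_compl_eq_zero_iff₀]
    · exact W.nn z
    · have : MeasurableSet {ω : ℕ → Zd d | ∀ t, IsNbr (ω t) (ω (t+1))} := by
        rw [Set.ofPred_forall]
        refine MeasurableSet.iInter fun t => ?_
        have hm : Measurable fun ω : ℕ → Zd d => (ω t, ω (t+1)) := by fun_prop
        exact hm (MeasurableSet.of_discrete (s := {q : Zd d × Zd d | IsNbr q.1 q.2}))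
      exact this.nullMeasurableSet
  have hsub : wpCyl γ m ∩ E ⊆ {ω | ∀ t, IsNbr (ω t) (ω (t+1))}ᶜ ∪
      ⋃ p ∈ (Finset.univ : Finset (Fin d × Bool)), (wpCyl (ext p) (m+1) ∩ E') := by
    intro ω hω
    by_cases hn : ∀ t, IsNbr (ω t) (ω (t+1))
    · right
      obtain ⟨p, hp⟩ := wp_ext_nbr _ _ (hn m)
      simp only [Set.mem_iUnion]
      refine ⟨p, Finset.mem_univ _, fun t ht => ?_, hE hω⟩
      rcases Nat.lt_or_ge t (m+1) with h | h
      · rw [hext p t (by omega)]; exact hω.1 t (by omega)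
      · obtain rfl : t = m + 1 := by omega
        rw [hext1, hp, hω.1 m le_rfl]
    · left; exact hn
  have hD : ((2 * d : ℕ) : ℝ≥0∞) ≠ 0 := by simp; omega
  have hD' : ((2 * d : ℕ) : ℝ≥0∞) ≠ ⊤ := ENNReal.natCast_ne_top _
  calc W.P z (wpCyl γ m ∩ E) ≤ _ := measure_mono hsub
    _ ≤ 0 + ∑ p : Fin d × Bool, W.P z (wpCyl (ext p) (m+1) ∩ E') := by
        refine (measure_union_le _ _).trans ?_
        rw [hnull]
        gcongr
        exact measure_biUnion_finset_le _ _
    _ ≤ ∑ p : Fin d × Bool, ((2 * d : ℕ) : ℝ≥0∞)⁻¹ ^ (m+1) * G (γ m + stepVec p) := by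
        rw [zero_add]
        refine Finset.sum_le_sum fun p _ => ?_
        have := hrec (ext p) (by rw [hext p 0 (by omega), h0]) (fun t ht => by
          rcases Nat.lt_or_ge t m with h | h
          · rw [hext p t (by omega), hext p (t+1) (by omega)]; exact hγ t h
          · obtain rfl : t = m := by omega
            rw [hext1, hext p t le_rfl]; exact wp_nbr_step _ _)
        rwa [hext1] at this
    _ ≤ ((2 * d : ℕ) : ℝ≥0∞)⁻¹ ^ (m+1) * ((2 * d : ℕ) * G (γ m)) := by
        rw [← Finset.mul_sum]; gcongr; exact hG _
    _ = _ := by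
        rw [pow_succ, mul_assoc, ← mul_assoc _ _ (G (γ m)), ENNReal.inv_mul_cancel hD hD', one_mul]

def wpE1 {d : ℕ} (K' : Set (Zd d)) (m n : ℕ) : Set (ℕ → Zd d) := {ω | ∃ t, m ≤ t ∧ t ≤ m + n ∧ ω t ∈ K'}

def wpE2 {d : ℕ} (K K' : Set (Zd d)) (m n : ℕ) : Set (ℕ → Zd d) :=
  {ω | ∃ s t, m ≤ s ∧ s ≤ t ∧ t ≤ m + n ∧ ω s ∈ K ∧ ω t ∈ K'}

lemma wp_hit1 {d : ℕ} (hd : 0 < d) (W : SRW d) (z : Zd d) (K' : Set (Zd d)) (G : Zd d → ℝ≥0∞)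
    (hG : ∀ x, ∑ p : Fin d × Bool, G (x + stepVec p) ≤ (2 * d : ℕ) * G x)
    (hK : ∀ x ∈ K', 1 ≤ G x) (n : ℕ) : ∀ (m : ℕ) (γ : ℕ → Zd d), γ 0 = z →
    (∀ t < m, IsNbr (γ t) (γ (t+1))) →
    W.P z (wpCyl γ m ∩ wpE1 K' m n) ≤ ((2 * d : ℕ) : ℝ≥0∞)⁻¹ ^ m * G (γ m) := by
  have hin : ∀ n m : ℕ, ∀ γ : ℕ → Zd d, γ 0 = z → (∀ t < m, IsNbr (γ t) (γ (t+1))) → γ m ∈ K' →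
      W.P z (wpCyl γ m ∩ wpE1 K' m n) ≤ ((2 * d : ℕ) : ℝ≥0∞)⁻¹ ^ m * G (γ m) := by
    intro n m γ h0 hγ hm
    calc _ ≤ W.P z (wpCyl γ m) := measure_mono Set.inter_subset_left
      _ = ((2 * d : ℕ) : ℝ≥0∞)⁻¹ ^ m * 1 := by rw [mul_one]; exact W.cyl z m γ h0 hγ
      _ ≤ _ := by gcongr; exact hK _ hm
  induction n with
  | zero =>
    intro m γ h0 hγ
    by_cases hm : γ m ∈ K'
    · exact hin 0 m γ h0 hγ hm
    · have : wpCyl γ m ∩ wpE1 K' m 0 = ∅ := by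
        rw [Set.eq_empty_iff_forall_notMem]
        rintro ω ⟨h1, t, ht1, ht2, ht3⟩
        obtain rfl : t = m := by omega
        rw [h1 t le_rfl] at ht3
        exact hm ht3
      rw [this]; simp
  | succ n ih =>
    intro m γ h0 hγ
    by_cases hm : γ m ∈ K'
    · exact hin _ m γ h0 hγ hm
    · refine wp_onestep hd W z _ (wpE1 K' (m+1) n) G hG m γ h0 hγ ?_ (fun γ' h0' hγ' => ih (m+1) γ' h0' hγ')
      rintro ω ⟨h1, t, ht1, ht2, ht3⟩
      refine ⟨t, ?_, by omega, ht3⟩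
      rcases Nat.lt_or_ge m t with h | h
      · omega
      · obtain rfl : t = m := by omega
        rw [h1 t le_rfl] at ht3
        exact absurd ht3 hm

lemma wp_hit2 {d : ℕ} (hd : 0 < d) (W : SRW d) (z : Zd d) (K K' : Set (Zd d)) (G G' : Zd d → ℝ≥0∞)
    (hG : ∀ x, ∑ p : Fin d × Bool, G (x + stepVec p) ≤ (2 * d : ℕ) * G x)
    (hG' : ∀ x, ∑ p : Fin d × Bool, G' (x + stepVec p) ≤ (2 * d : ℕ) * G' x)
    (hK : ∀ x ∈ K, 1 ≤ G x) (hK' : ∀ x ∈ K', 1 ≤ G' x) (M : ℝ≥0∞) (hM : ∀ x ∈ K, G' x ≤ M)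
    (n : ℕ) : ∀ (m : ℕ) (γ : ℕ → Zd d), γ 0 = z →
    (∀ t < m, IsNbr (γ t) (γ (t+1))) →
    W.P z (wpCyl γ m ∩ wpE2 K K' m n) ≤ ((2 * d : ℕ) : ℝ≥0∞)⁻¹ ^ m * (M * G (γ m)) := by
  have hin : ∀ n m : ℕ, ∀ γ : ℕ → Zd d, γ 0 = z → (∀ t < m, IsNbr (γ t) (γ (t+1))) → γ m ∈ K →
      W.P z (wpCyl γ m ∩ wpE2 K K' m n) ≤ ((2 * d : ℕ) : ℝ≥0∞)⁻¹ ^ m * (M * G (γ m)) := by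
    intro n m γ h0 hγ hm
    calc _ ≤ W.P z (wpCyl γ m ∩ wpE1 K' m n) := by
          refine measure_mono (Set.inter_subset_inter_right _ ?_)
          rintro ω ⟨s, t, h1, h2, h3, h4, h5⟩
          exact ⟨t, by omega, h3, h5⟩
      _ ≤ _ := wp_hit1 hd W z K' G' hG' hK' n m γ h0 hγ
      _ ≤ ((2 * d : ℕ) : ℝ≥0∞)⁻¹ ^ m * (M * 1) := by gcongr; rw [mul_one]; exact hM _ hm
      _ ≤ _ := by gcongr; exact hK _ hm
  induction n with
  | zero =>
    intro m γ h0 hγ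
    by_cases hm : γ m ∈ K
    · exact hin 0 m γ h0 hγ hm
    · have : wpCyl γ m ∩ wpE2 K K' m 0 = ∅ := by
        rw [Set.eq_empty_iff_forall_notMem]
        rintro ω ⟨h1, s, t, ht1, ht2, ht3, ht4, _⟩
        obtain rfl : s = m := by omega
        rw [h1 s le_rfl] at ht4
        exact hm ht4
      rw [this]; simp
  | succ n ih =>
    intro m γ h0 hγ
    by_cases hm : γ m ∈ K
    · exact hin _ m γ h0 hγ hm
    · refine wp_onestep hd W z _ (wpE2 K K' (m+1) n) (fun x => M * G x) (fun x => ?_) m γ h0 hγ ?_ (fun γ' h0' hγ' => ih (m+1) γ' h0' hγ')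
      · rw [← Finset.mul_sum, mul_left_comm]; gcongr; exact hG x
      rintro ω ⟨h1, s, t, ht1, ht2, ht3, ht4, ht5⟩
      refine ⟨s, t, ?_, ht2, by omega, ht4, ht5⟩
      rcases Nat.lt_or_ge m s with h | h
      · omega
      · obtain rfl : s = m := by omega
        rw [h1 s le_rfl] at ht4
        exact absurd ht4 hm

lemma wp_order {d : ℕ} (hd : 0 < d) (W : SRW d) (z : Zd d) (K K' : Set (Zd d)) (G G' : Zd d → ℝ≥0∞)
    (hG : ∀ x, ∑ p : Fin d × Bool, G (x + stepVec p) ≤ (2 * d : ℕ) * G x)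
    (hG' : ∀ x, ∑ p : Fin d × Bool, G' (x + stepVec p) ≤ (2 * d : ℕ) * G' x)
    (hK : ∀ x ∈ K, 1 ≤ G x) (hK' : ∀ x ∈ K', 1 ≤ G' x) (M : ℝ≥0∞) (hM : ∀ x ∈ K, G' x ≤ M) :
    W.P z {ω | ∃ s t, s ≤ t ∧ ω s ∈ K ∧ ω t ∈ K'} ≤ M * G z := by
  have := W.isProb z
  have h1 : {ω : ℕ → Zd d | ∃ s t, s ≤ t ∧ ω s ∈ K ∧ ω t ∈ K'} = ⋃ n, wpE2 K K' 0 n := by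
    ext ω
    simp only [wpE2, Set.mem_ofPred_eq, Set.mem_iUnion]
    constructor
    · rintro ⟨s, t, h1, h2, h3⟩
      exact ⟨t, s, t, by omega, h1, by omega, h2, h3⟩
    · rintro ⟨_, s, t, _, h1, _, h2, h3⟩
      exact ⟨s, t, h1, h2, h3⟩
  have hmono : Monotone (wpE2 K K' 0) := by
    rintro a b hab ω ⟨s, t, h1, h2, h3, h4⟩
    exact ⟨s, t, h1, h2, by omega, h4⟩
  have hnull : W.P z {ω | ω 0 = z}ᶜ = 0 := by
    rw [prob_compl_eq_zero_iff₀]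
    · exact W.start z
    · have hm : Measurable fun ω : ℕ → Zd d => ω 0 := by fun_prop
      have : MeasurableSet {ω : ℕ → Zd d | ω 0 = z} :=
        hm (MeasurableSet.of_discrete (s := {q : Zd d | q = z}))
      exact this.nullMeasurableSet
  rw [h1, hmono.measure_iUnion]
  refine iSup_le fun n => ?_
  have := wp_hit2 hd W z K K' G G' hG hG' hK hK' M hM n 0 (fun _ => z) rfl (by simp)
  rw [pow_zero, one_mul] at this
  refine le_trans ?_ this
  have hs : wpE2 K K' 0 n ⊆ {ω | ω 0 = z}ᶜ ∪ (wpCyl (fun _ => z) 0 ∩ wpE2 K K' 0 n) := by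
    intro ω hω
    by_cases h : ω 0 = z
    · right; refine ⟨fun t ht => ?_, hω⟩
      obtain rfl : t = 0 := by omega
      exact h
    · left; exact h
  calc _ ≤ _ := measure_mono hs
    _ ≤ _ := measure_union_le _ _
    _ = _ := by rw [hnull, zero_add]

lemma wp_le_supNorm {d : ℕ} (x : Zd d) (i : Fin d) : (x i).natAbs ≤ supNorm x :=
  Finset.le_sup (f := fun i => (x i).natAbs) (Finset.mem_univ i)

lemma wp_supNorm_le {d : ℕ} {x : Zd d} {n : ℕ} (h : ∀ i, (x i).natAbs ≤ n) : supNorm x ≤ n :=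
  Finset.sup_le fun i _ => h i

lemma wp_norm_sq_le {d : ℕ} (x : Zd d) : ∑ i, ((x i : ℝ)) ^ 2 ≤ d * (supNorm x : ℝ) ^ 2 := by
  have : ∀ i ∈ (Finset.univ : Finset (Fin d)), ((x i : ℝ)) ^ 2 ≤ (supNorm x : ℝ) ^ 2 := by
    intro i _
    rw [← sq_abs]
    have h := wp_le_supNorm x i
    have h2 : |(x i : ℝ)| = ((x i).natAbs : ℝ) := by
      rw [Nat.cast_natAbs]; simp
    rw [h2]; gcongr
  simpa using Finset.sum_le_card_nsmul _ _ _ this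

lemma wp_le_norm_sq {d : ℕ} (hd : 0 < d) (x : Zd d) : (supNorm x : ℝ) ^ 2 ≤ ∑ i, ((x i : ℝ)) ^ 2 := by
  have : Nonempty (Fin d) := ⟨⟨0, hd⟩⟩
  obtain ⟨i, _, hi⟩ := Finset.exists_mem_eq_sup (Finset.univ : Finset (Fin d)) Finset.univ_nonempty
    (fun i => (x i).natAbs)
  have h2 : |(x i : ℝ)| = ((x i).natAbs : ℝ) := by
    rw [Nat.cast_natAbs]; simp
  have h3 : (supNorm x : ℝ) = |(x i : ℝ)| := by rw [h2]; unfold supNorm; rw [hi]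
  rw [h3, sq_abs]
  exact Finset.single_le_sum (f := fun j => ((x j : ℝ)) ^ 2) (fun i _ => sq_nonneg _) (Finset.mem_univ i)

lemma wp_step_sq {d : ℕ} (x y : Zd d) (i : Fin d) (b : Bool) :
    ∑ j, (((x + stepVec (i, b) - y) j : ℤ) : ℝ) ^ 2 =
      (∑ j, (((x - y) j : ℤ) : ℝ) ^ 2) + 1 + 2 * (if b then 1 else -1) * (((x - y) i : ℤ) : ℝ) := by
  rw [← Finset.add_sum_erase _ _ (Finset.mem_univ i), ← Finset.add_sum_erase _ (fun j => (((x - y) j : ℤ) : ℝ) ^ 2) (Finset.mem_univ i)]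
  have : ∑ j ∈ Finset.univ.erase i, (((x + stepVec (i, b) - y) j : ℤ) : ℝ) ^ 2
     = ∑ j ∈ Finset.univ.erase i, (((x - y) j : ℤ) : ℝ) ^ 2 := by
    refine Finset.sum_congr rfl fun j hj => ?_
    simp [stepVec, Finset.ne_of_mem_erase hj]
  rw [this]
  cases b <;> simp [stepVec] <;> ring

lemma wp_G {d e : ℕ} (he : 1 ≤ e) (hd : d = e + 2) : ∃ C : ℝ≥0∞, C ≠ ⊤ ∧ ∀ (r : ℕ) (y : Zd d), 1 ≤ r →
    ∃ G : Zd d → ℝ≥0∞, (∀ x, ∑ p : Fin d × Bool, G (x + stepVec p) ≤ (2 * d : ℕ) * G x) ∧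
      (∀ x, supNorm (x - y) ≤ r → 1 ≤ G x) ∧
      ∀ x, ∀ m : ℕ, 1 ≤ m → r * m ≤ r + supNorm (x - y) → G x ≤ C * ((m : ℝ≥0∞)⁻¹) ^ e := by
  obtain ⟨a, ha, H⟩ := wp_superharm (d := d) (by omega)
  set p : ℝ := ((d:ℝ) - 2)/2 with hp
  have hpe : p = (e:ℝ) / 2 := by rw [hp, hd]; push_cast; ring
  have hp0 : 0 < p := by rw [hpe]; have : (1:ℝ) ≤ e := by exact_mod_cast he
                         linarith
  refine ⟨ENNReal.ofReal ((2 * (d + a)) ^ p), ENNReal.ofReal_ne_top, fun r y hr => ?_⟩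
  have hr' : (1:ℝ) ≤ r := by exact_mod_cast hr
  let S : Zd d → ℝ := fun x => ∑ j, (((x - y) j : ℤ) : ℝ) ^ 2
  have hS0 : ∀ x, 0 ≤ S x := fun x => Finset.sum_nonneg fun i _ => sq_nonneg _
  have hA0 : 0 < a * (r:ℝ)^2 := by positivity
  have hpos : ∀ x, 0 < S x + a * (r:ℝ)^2 := fun x => by linarith [hS0 x]
  let g : Zd d → ℝ := fun x => ((d + a) * (r:ℝ)^2) ^ p * (S x + a * (r:ℝ)^2) ^ (-p)
  have hg0 : ∀ x, 0 ≤ g x := fun x => by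
    have := (hpos x).le
    positivity
  refine ⟨fun x => ENNReal.ofReal (g x), fun x => ?_, fun x hx => ?_, fun x m hm hx => ?_⟩
  · rw [← ENNReal.ofReal_sum_of_nonneg (fun _ _ => hg0 _), ← ENNReal.ofReal_natCast,
      ← ENNReal.ofReal_mul (by positivity)]
    apply ENNReal.ofReal_le_ofReal
    have h1 := H (a * (r:ℝ)^2) (le_mul_of_one_le_right (by linarith) (one_le_pow₀ hr')) (fun j => (((x - y) j : ℤ) : ℝ))
    have h2 : ∀ i b, S (x + stepVec (i, b)) = S x + 1 + 2 * (if b then 1 else -1) * (((x - y) i : ℤ) : ℝ) :=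
      fun i b => wp_step_sq x y i b
    simp only [Fintype.sum_prod_type, Fintype.sum_bool, g, h2]
    simp only [← mul_add]
    rw [← Finset.mul_sum, mul_left_comm]
    refine mul_le_mul_of_nonneg_left ?_ (by positivity)
    refine le_trans (le_of_eq ?_) (h1.trans (le_of_eq ?_))
    · refine Finset.sum_congr rfl fun i _ => ?_
      congr 2 <;> simp [S] <;> ring
    · push_cast; rfl
  · rw [← ENNReal.ofReal_one]
    apply ENNReal.ofReal_le_ofReal
    have h1 : S x + a * (r:ℝ)^2 ≤ (d + a) * (r:ℝ)^2 := by
      have h2 := wp_norm_sq_le (x - y)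
      have h3 : (supNorm (x - y) : ℝ) ^ 2 ≤ (r:ℝ)^2 := by gcongr
      have h4 : (d:ℝ) * (supNorm (x - y) : ℝ) ^ 2 ≤ d * (r:ℝ)^2 := by gcongr
      change S x ≤ _ at h2
      linarith
    simp only [g]
    rw [Real.rpow_neg (hpos x).le, ← div_eq_mul_inv, one_le_div (Real.rpow_pos_of_pos (hpos x) _)]
    exact Real.rpow_le_rpow (hpos x).le h1 hp0.le
  · have hm' : (1:ℝ) ≤ m := by exact_mod_cast hm
    have hx' : (r:ℝ) * m ≤ r + supNorm (x - y) := by exact_mod_cast hx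
    have hm0 : (0:ℝ) < m := by linarith
    have h1 := wp_le_norm_sq (d := d) (by omega) (x - y)
    change _ ≤ S x at h1
    have h2 : ((r:ℝ) * m)^2 ≤ 2 * (S x + a * (r:ℝ)^2) := by
      have h3 : ((r:ℝ) * m)^2 ≤ (r + supNorm (x - y))^2 := by gcongr
      nlinarith [sq_nonneg ((r:ℝ) - supNorm (x - y)), sq_nonneg (r:ℝ)]
    have h4 : g x ≤ (2 * (d + a)) ^ p * ((m:ℝ)⁻¹)^e := by
      have h5 : (m:ℝ)^e = ((m:ℝ)^2) ^ p := by
        rw [← Real.rpow_natCast (m:ℝ) 2, ← Real.rpow_mul hm0.le, hpe, ← Real.rpow_natCast]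
        congr 1; push_cast; ring
      simp only [g]
      rw [inv_pow, h5, Real.rpow_neg (hpos x).le, ← div_eq_mul_inv, ← div_eq_mul_inv,
        ← Real.div_rpow (by positivity) (hpos x).le, ← Real.div_rpow (by positivity) (by positivity)]
      refine Real.rpow_le_rpow (div_nonneg (by positivity) (hpos x).le) ?_ hp0.le
      rw [div_le_div_iff₀ (hpos x) (by positivity)]
      have : (0:ℝ) ≤ d + a := by positivity
      nlinarith
    refine (ENNReal.ofReal_le_ofReal h4).trans (le_of_eq ?_)
    rw [ENNReal.ofReal_mul (by positivity), ENNReal.ofReal_pow (by positivity),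
      ENNReal.ofReal_inv_of_pos hm0, ENNReal.ofReal_natCast]

lemma wp_pow_diff (a k n : ℕ) : (a + k)^(n+1) ≤ a^(n+1) + (n+1) * k * (a+k)^n := by
  induction n with
  | zero => simp
  | succ n ih =>
    calc (a+k)^(n+1+1) = (a+k)^(n+1) * a + k * (a+k)^(n+1) := by ring
      _ ≤ (a^(n+1) + (n+1) * k * (a+k)^n) * a + k * (a+k)^(n+1) := by gcongr
      _ = a^(n+1+1) + (n+1) * k * ((a+k)^n * a) + k * (a+k)^(n+1) := by ring
      _ ≤ a^(n+1+1) + (n+1) * k * ((a+k)^n * (a+k)) + k * (a+k)^(n+1) := by gcongr; omega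
      _ = _ := by ring

def wpSphere (d m : ℕ) : Finset (Zd d) :=
  Fintype.piFinset (fun _ => Finset.Icc (-(m:ℤ)) m) \ Fintype.piFinset (fun _ => Finset.Ioo (-(m:ℤ)) m)

lemma wp_mem_sphere {d : ℕ} (hd : 0 < d) (j : Zd d) : j ∈ wpSphere d (supNorm j) := by
  unfold wpSphere
  rw [Finset.mem_sdiff, Fintype.mem_piFinset, Fintype.mem_piFinset]
  constructor
  · intro i
    have := wp_le_supNorm j i
    rw [Finset.mem_Icc]; omega
  · intro h
    have : Nonempty (Fin d) := ⟨⟨0, hd⟩⟩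
    obtain ⟨i, _, hi⟩ := Finset.exists_mem_eq_sup (Finset.univ : Finset (Fin d)) Finset.univ_nonempty
      (fun i => (j i).natAbs)
    have h1 : supNorm j = (j i).natAbs := hi
    have h2 := h i
    rw [Finset.mem_Ioo, h1] at h2
    omega

lemma wp_card_sphere (n m : ℕ) : (wpSphere (n+1) m).card ≤ ((n+1) * 2 * 2^n) * (m+1)^n := by
  unfold wpSphere
  rw [Finset.card_sdiff_of_subset (Fintype.piFinset_subset _ _ fun _ => Finset.Ioo_subset_Icc_self)]
  rw [Fintype.card_piFinset_const, Fintype.card_piFinset_const, Int.card_Icc, Int.card_Ioo]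
  rcases Nat.eq_zero_or_pos m with rfl | hm
  · have : 1 ≤ 2^n := Nat.one_le_two_pow
    simp
    nlinarith
  · have e1 : ((m:ℤ) + 1 - -(m:ℤ)).toNat = (2*m-1) + 2 := by omega
    have e2 : ((m:ℤ) - -(m:ℤ) - 1).toNat = 2*m-1 := by omega
    rw [e1, e2]
    have h := wp_pow_diff (2*m-1) 2 n
    have h2 : (2*m-1+2)^n ≤ 2^n * (m+1)^n := by
      rw [← mul_pow]; gcongr; omega
    have h3 : (n+1) * 2 * (2*m-1+2)^n ≤ (n+1) * 2 * (2^n * (m+1)^n) := by gcongr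
    rw [mul_assoc ((n+1)*2)]
    omega

lemma wp_layer (n : ℕ) (f : ℕ → ℝ≥0∞) :
    ∑' j : Zd (n+1), f (supNorm j) ≤ (((n+1) * 2 * 2^n : ℕ) : ℝ≥0∞) * ∑' m : ℕ, ((m : ℝ≥0∞)+1)^n * f m := by
  rw [← ENNReal.tsum_fiberwise _ (supNorm : Zd (n+1) → ℕ), ← ENNReal.tsum_mul_left]
  refine ENNReal.tsum_le_tsum fun m => ?_
  have h1 : ∑' b : (supNorm ⁻¹' {m} : Set (Zd (n+1))), f (supNorm b.1) = ∑' b : (supNorm ⁻¹' {m} : Set (Zd (n+1))), f m := by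
    refine tsum_congr fun b => ?_
    have := b.2
    rw [Set.mem_preimage, Set.mem_singleton_iff] at this
    rw [this]
  rw [h1]
  have hsub : (supNorm ⁻¹' {m} : Set (Zd (n+1))) ⊆ (wpSphere (n+1) m : Set (Zd (n+1))) := by
    intro j hj
    rw [Set.mem_preimage, Set.mem_singleton_iff] at hj
    rw [← hj]; exact wp_mem_sphere (by omega) j
  calc _ ≤ ∑' b : (wpSphere (n+1) m : Set (Zd (n+1))), f m := ENNReal.tsum_mono_subtype (fun _ => f m) hsub
    _ = ∑ b ∈ wpSphere (n+1) m, f m := Finset.tsum_subtype (wpSphere (n+1) m) (fun _ => f m)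
    _ = ((wpSphere (n+1) m).card : ℝ≥0∞) * f m := by simp
    _ ≤ ((((n+1) * 2 * 2^n) * (m+1)^n : ℕ) : ℝ≥0∞) * f m := by gcongr; exact wp_card_sphere n m
    _ = _ := by push_cast; ring

lemma wp_S1 (e : ℕ) : ∃ C : ℝ≥0∞, C ≠ ⊤ ∧ ∀ N : ℕ,
    ∑' j : Zd (e+2), (if supNorm j ≤ N then (((supNorm j : ℝ≥0∞) + 1)⁻¹)^e else 0) ≤ C * ((N:ℝ≥0∞)+1)^2 := by
  refine ⟨(((e+1+1) * 2 * 2^(e+1) : ℕ) : ℝ≥0∞), ENNReal.natCast_ne_top _, fun N => ?_⟩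
  refine (wp_layer (e+1) (fun m => if m ≤ N then (((m : ℝ≥0∞) + 1)⁻¹)^e else 0)).trans ?_
  gcongr
  have h1 : ∀ m : ℕ, ((m : ℝ≥0∞)+1)^(e+1) * (if m ≤ N then (((m : ℝ≥0∞) + 1)⁻¹)^e else 0) ≤
     if m ∈ Finset.range (N+1) then ((N:ℝ≥0∞)+1) else 0 := by
    intro m
    simp only [Finset.mem_range, Nat.lt_succ_iff]
    split_ifs with h
    · rw [pow_succ', mul_assoc, ← mul_pow, ENNReal.mul_inv_cancel (by simp) (by simp), one_pow, mul_one]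
      gcongr
    · simp
  refine (ENNReal.tsum_le_tsum h1).trans ?_
  rw [tsum_eq_sum (s := Finset.range (N+1)) (fun b hb => by simp only [hb, if_false])]
  rw [Finset.sum_congr rfl (fun m hm => if_pos hm)]
  rw [Finset.sum_const, Finset.card_range, nsmul_eq_mul, pow_two]
  push_cast
  exact le_rfl

lemma wp_S2 (e : ℕ) (he : 3 ≤ e) :
    ∑' j : Zd (e+2), (((supNorm j : ℝ≥0∞) + 1)⁻¹)^(2*e) ≠ ⊤ := by
  refine ne_top_of_le_ne_top ?_ (wp_layer (e+1) (fun m => (((m : ℝ≥0∞) + 1)⁻¹)^(2*e)))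
  refine ENNReal.mul_ne_top (ENNReal.natCast_ne_top _) ?_
  have h1 : ∀ m : ℕ, ((m : ℝ≥0∞)+1)^(e+1) * (((m : ℝ≥0∞) + 1)⁻¹)^(2*e) ≤
      (((((m : NNReal) + 1)^2)⁻¹ : NNReal) : ℝ≥0∞) := by
    intro m
    rw [show 2 * e = (e+1) + (e - 1) by omega, pow_add _ (e+1) (e-1), ← mul_assoc, ← mul_pow,
      ENNReal.mul_inv_cancel (by simp) (by simp), one_pow, one_mul]
    rw [ENNReal.coe_inv (by positivity)]
    push_cast
    rw [ENNReal.inv_pow]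
    exact pow_le_pow_right_of_le_one' (ENNReal.inv_le_one.mpr le_add_self) (by omega)
  refine ne_top_of_le_ne_top ?_ (ENNReal.tsum_le_tsum h1)
  rw [ENNReal.tsum_coe_ne_top_iff_summable]
  rw [← NNReal.summable_coe]
  have h2 : Summable (fun m : ℕ => (((m:ℝ))^2)⁻¹) := Real.summable_nat_pow_inv.mpr (by norm_num)
  have h3 := (summable_nat_add_iff 1).mpr h2
  refine h3.congr fun m => ?_
  push_cast
  rfl

lemma wp_tri {d : ℕ} (x y : Zd d) : supNorm (x + y) ≤ supNorm x + supNorm y := by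
  refine wp_supNorm_le fun i => ?_
  have h1 := wp_le_supNorm x i
  have h2 := wp_le_supNorm y i
  have : (x + y) i = x i + y i := rfl
  omega

lemma wp_neg {d : ℕ} (x : Zd d) : supNorm (-x) = supNorm x := by
  simp [supNorm]

lemma wp_sub_comm {d : ℕ} (x y : Zd d) : supNorm (x - y) = supNorm (y - x) := by
  rw [← wp_neg, neg_sub]

lemma wp_scale {d : ℕ} (c : ℕ) (x y : Zd d) (h : ∀ i, y i = c * x i) : supNorm y = c * supNorm x := by
  have hy : ∀ i, (y i).natAbs = c * (x i).natAbs := fun i => by rw [h i, Int.natAbs_mul]; simp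
  apply le_antisymm
  · refine wp_supNorm_le fun i => ?_
    rw [hy]; exact Nat.mul_le_mul_left _ (wp_le_supNorm x i)
  · rcases Nat.eq_zero_or_pos c with rfl | hc
    · simp
    · rw [mul_comm, ← Nat.le_div_iff_mul_le hc]
      refine wp_supNorm_le fun i => ?_
      rw [Nat.le_div_iff_mul_le hc, mul_comm, ← hy]
      exact wp_le_supNorm y i

lemma wp_supNorm_pos {d : ℕ} {x : Zd d} (h : x ≠ 0) : 1 ≤ supNorm x := by
  by_contra hc
  apply h
  funext i
  have := wp_le_supNorm x i
  show x i = 0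
  omega

/-- Lattice index of a point. -/
def wpIdx {d : ℕ} (r : ℕ) (y : Zd d) : Zd d := fun i => y i / (10 * r : ℤ)

lemma wp_idx_mul {d r : ℕ} {y : Zd d} (h : ∀ i, (10 * r : ℤ) ∣ y i) (i : Fin d) :
    y i = ((10 * r : ℕ) : ℤ) * wpIdx r y i := by
  unfold wpIdx
  push_cast
  exact (Int.mul_ediv_cancel' (h i)).symm

lemma wp_idx_sub {d r : ℕ} {y y' : Zd d} (h : ∀ i, (10 * r : ℤ) ∣ y i) (h' : ∀ i, (10 * r : ℤ) ∣ y' i) :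
    supNorm (y - y') = 10 * r * supNorm (wpIdx r y - wpIdx r y') := by
  refine wp_scale _ _ _ fun i => ?_
  rw [Pi.sub_apply, Pi.sub_apply, mul_sub, ← wp_idx_mul h, ← wp_idx_mul h']

/-- Nearest lattice index. -/
def wpNear {d : ℕ} (r : ℕ) (z : Zd d) : Zd d := fun i => (z i + 5 * r) / (10 * r : ℤ)

lemma wp_near {d r : ℕ} (hr : 1 ≤ r) (z : Zd d) :
    supNorm (z - fun i => ((10 * r : ℕ) : ℤ) * wpNear r z i) ≤ 5 * r := by
  refine wp_supNorm_le fun i => ?_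
  have h1 := Int.mul_ediv_add_emod (z i + 5 * r) (10 * r : ℤ)
  have h2 := Int.emod_nonneg (z i + 5 * r) (show (10 * r : ℤ) ≠ 0 by positivity)
  have h3 := Int.emod_lt_of_pos (z i + 5 * r) (show 0 < (10 * r : ℤ) by positivity)
  simp only [Pi.sub_apply, wpNear]
  push_cast
  generalize (10 * r : ℤ) * ((z i + 5 * r) / (10 * r : ℤ)) = q at *
  generalize (z i + 5 * r) % (10 * r : ℤ) = t at *
  omega

lemma wp_near_dist {d r : ℕ} (hr : 1 ≤ r) (z y : Zd d) (h : ∀ i, (10 * r : ℤ) ∣ y i) :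
    10 * r * supNorm (wpIdx r y - wpNear r z) ≤ supNorm (z - y) + 5 * r := by
  set w : Zd d := fun i => ((10 * r : ℕ) : ℤ) * wpNear r z i with hw
  have h1 : supNorm (y - w) = 10 * r * supNorm (wpIdx r y - wpNear r z) := by
    refine wp_scale _ _ _ fun i => ?_
    rw [Pi.sub_apply, Pi.sub_apply, mul_sub, ← wp_idx_mul h]
  rw [← h1, show y - w = (y - z) + (z - w) by abel, wp_sub_comm z y]
  exact (wp_tri _ _).trans (Nat.add_le_add_left (wp_near hr z) _)

lemma wp_near_m {d r : ℕ} (hr : 1 ≤ r) (z y : Zd d) (h : ∀ i, (10 * r : ℤ) ∣ y i) :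
    r * (supNorm (wpIdx r y - wpNear r z) + 1) ≤ r + supNorm (z - y) := by
  have h1 := wp_near_dist hr z y h
  generalize supNorm (wpIdx r y - wpNear r z) = t at *
  rcases Nat.eq_zero_or_pos t with rfl | ht
  · simp
  · nlinarith

lemma wp_near_N {d r R : ℕ} (hr : 1 ≤ r) (hR : r ≤ R) (z y : Zd d) (h : ∀ i, (10 * r : ℤ) ∣ y i)
    (hz : supNorm z ≤ R) (hy : supNorm y ≤ 2 * R + r) : supNorm (wpIdx r y - wpNear r z) ≤ R / r := by
  have h1 := wp_near_dist hr z y h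
  have h2 : supNorm (z - y) ≤ supNorm z + supNorm y := by
    rw [sub_eq_add_neg, ← wp_neg y]; exact wp_tri _ _
  rw [Nat.le_div_iff_mul_le (by omega)]
  nlinarith

lemma wp_pair_prob {e : ℕ} (he : 1 ≤ e) : ∃ C : ℝ≥0∞, C ≠ ⊤ ∧ ∀ (W : SRW (e+2)) (r : ℕ) (z y y' : Zd (e+2)),
    1 ≤ r → (∀ i, (10 * r : ℤ) ∣ y i) → (∀ i, (10 * r : ℤ) ∣ y' i) → y ≠ y' →
    W.P z {ω | ∃ s t, s ≤ t ∧ ω s ∈ {w : Zd (e+2) | supNorm (w - y) ≤ r} ∧ ω t ∈ {w : Zd (e+2) | supNorm (w - y') ≤ r}}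
    ≤ C * ((((supNorm (wpIdx r y - wpNear r z) : ℝ≥0∞) + 1)⁻¹)^e *
      (((supNorm (wpIdx r y - wpIdx r y') : ℝ≥0∞) + 1)⁻¹)^e) := by
  obtain ⟨C, hC, H⟩ := wp_G he (rfl : e + 2 = e + 2)
  refine ⟨C * C, ENNReal.mul_ne_top hC hC, fun W r z y y' hr hy hy' hne => ?_⟩
  obtain ⟨G, hG1, hG2, hG3⟩ := H r y hr
  obtain ⟨G', hG1', hG2', hG3'⟩ := H r y' hr
  have hD := wp_idx_sub hy hy'
  have hpos := wp_supNorm_pos (sub_ne_zero.mpr hne)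
  have hM : ∀ x ∈ {w : Zd (e+2) | supNorm (w - y) ≤ r},
      G' x ≤ C * (((supNorm (wpIdx r y - wpIdx r y') : ℝ≥0∞) + 1)⁻¹)^e := by
    intro x hx
    have hx' : supNorm (x - y) ≤ r := hx
    have h1 : supNorm (y - y') ≤ supNorm (x - y) + supNorm (x - y') := by
      rw [wp_sub_comm x y, show y - y' = (y - x) + (x - y') by abel]; exact wp_tri _ _
    have := hG3' x (supNorm (wpIdx r y - wpIdx r y') + 1) (by omega) (by
      generalize supNorm (wpIdx r y - wpIdx r y') = t at *
      have ht : 1 ≤ t := by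
        rcases Nat.eq_zero_or_pos t with rfl | ht
        · omega
        · exact ht
      nlinarith)
    simpa using this
  have h2 := hG3 z (supNorm (wpIdx r y - wpNear r z) + 1) (by omega) (wp_near_m hr z y hy)
  refine (wp_order (by omega) W z _ _ G G' hG1 hG1' hG2 hG2' _ hM).trans ?_
  calc _ ≤ _ := mul_le_mul_right h2 _
    _ = _ := by push_cast; ring

theorem weighted_pairs_of_visited_boxes_bound {d : ℕ} (hd : 5 ≤ d) :
    ∃ C : ℝ≥0∞, C ≠ ⊤ ∧ ∀ (W : SRW d) (r R : ℕ) (z : Zd d),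
      1 ≤ r → r ≤ R → supNorm z ≤ R →
      (∑' y : {y : Zd d // (∀ i, (10 * r : ℤ) ∣ y i) ∧ supNorm y ≤ 2 * R + r},
        ∑' y' : {y' : Zd d // ((∀ i, (10 * r : ℤ) ∣ y' i) ∧ supNorm y' ≤ 2 * R + r) ∧ y' ≠ y.1},
          W.P z (Hits {w : Zd d | supNorm (w - y.1) ≤ r} ∩ Hits {w : Zd d | supNorm (w - y'.1) ≤ r}) *
            ((supNorm (y.1 - y'.1) : ℝ≥0∞)) ^ ((2 : ℤ) - d))
        ≤ C * ((R : ℝ≥0∞) / r) ^ 2 * ((r : ℝ≥0∞)) ^ ((2 : ℤ) - d) := by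
  obtain ⟨k, rfl⟩ : ∃ k, d = (k + 1) + 2 := ⟨d - 3, by omega⟩
  have hz : ∀ x : ℝ≥0∞, x ^ ((2 : ℤ) - ((k + 1 + 2 : ℕ) : ℤ)) = (x⁻¹)^(k+1) := by
    intro x
    rw [show (2 : ℤ) - ((k + 1 + 2 : ℕ) : ℤ) = Int.negSucc k by omega, zpow_negSucc, ENNReal.inv_pow]
  simp only [hz]
  have he : 3 ≤ k + 1 := by omega
  set e := k + 1 with hek
  obtain ⟨C1, hC1, H1⟩ := wp_pair_prob (e := e) (by omega)
  obtain ⟨C2, hC2, H2⟩ := wp_S1 e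
  have H3 := wp_S2 e he
  set S := ∑' j : Zd (e+2), (((supNorm j : ℝ≥0∞) + 1)⁻¹)^(2*e) with hS
  refine ⟨C1 * (2 * (S * (C2 * 4))), ?_, fun W r R z hr hR hzR => ?_⟩
  · exact ENNReal.mul_ne_top hC1 (ENNReal.mul_ne_top (by simp) (ENNReal.mul_ne_top H3 (ENNReal.mul_ne_top hC2 (by simp))))
  let N := R / r
  let a : Zd (e+2) → ℝ≥0∞ := fun j => if supNorm j ≤ N then (((supNorm j : ℝ≥0∞) + 1)⁻¹)^e else 0
  let b : Zd (e+2) → ℝ≥0∞ := fun j => (((supNorm j : ℝ≥0∞) + 1)⁻¹)^(2*e)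
  let k0 := wpNear r z
  let F : Zd (e+2) → Zd (e+2) → ℝ≥0∞ := fun u v => (a (u - k0) + a (v - k0)) * b (u - v)
  let c : ℝ≥0∞ := C1 * ((r : ℝ≥0∞)⁻¹)^e
  have hinj : ∀ {y y' : Zd (e+2)}, (∀ i, (10 * r : ℤ) ∣ y i) → (∀ i, (10 * r : ℤ) ∣ y' i) →
      wpIdx r y = wpIdx r y' → y = y' := by
    intro y y' h h' hh
    funext i
    rw [wp_idx_mul h, wp_idx_mul h', hh]
  have hterm : ∀ y y' : Zd (e+2), (∀ i, (10 * r : ℤ) ∣ y i) → (∀ i, (10 * r : ℤ) ∣ y' i) →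
      supNorm y ≤ 2 * R + r → supNorm y' ≤ 2 * R + r → y' ≠ y →
      W.P z (Hits {w : Zd (e+2) | supNorm (w - y) ≤ r} ∩ Hits {w : Zd (e+2) | supNorm (w - y') ≤ r}) *
            ((supNorm (y - y') : ℝ≥0∞)⁻¹) ^ e ≤ c * F (wpIdx r y) (wpIdx r y') := by
    intro y y' hy hy' hyR hyR' hne
    have e1 : a (wpIdx r y - k0) = (((supNorm (wpIdx r y - wpNear r z) : ℝ≥0∞) + 1)⁻¹)^e :=
      if_pos (wp_near_N hr hR z y hy hzR hyR)
    have e2 : a (wpIdx r y' - k0) = (((supNorm (wpIdx r y' - wpNear r z) : ℝ≥0∞) + 1)⁻¹)^e :=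
      if_pos (wp_near_N hr hR z y' hy' hzR hyR')
    have p1 := H1 W r z y y' hr hy hy' hne.symm
    have p2 := H1 W r z y' y hr hy' hy hne
    rw [← e1] at p1
    rw [← e2, wp_sub_comm (wpIdx r y')] at p2
    set q : ℝ≥0∞ := (((supNorm (wpIdx r y - wpIdx r y') : ℝ≥0∞) + 1)⁻¹)^e with hq
    have hb : b (wpIdx r y - wpIdx r y') = q * q := by
      simp only [b, hq]; rw [← pow_add, two_mul]
    have hP : W.P z (Hits {w : Zd (e+2) | supNorm (w - y) ≤ r} ∩ Hits {w : Zd (e+2) | supNorm (w - y') ≤ r})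
        ≤ C1 * ((a (wpIdx r y - k0) + a (wpIdx r y' - k0)) * q) := by
      refine le_trans (measure_mono ?_) ((measure_union_le _ _).trans ((add_le_add p1 p2).trans (le_of_eq ?_)))
      · rintro ω ⟨⟨s, hs⟩, ⟨t, ht⟩⟩
        rcases le_total s t with h | h
        · left; exact ⟨s, t, h, hs, ht⟩
        · right; exact ⟨t, s, h, ht, hs⟩
      · ring
    have hw : ((supNorm (y - y') : ℝ≥0∞)⁻¹) ^ e ≤ ((r : ℝ≥0∞)⁻¹)^e * q := by
      rw [hq, ← mul_pow, ← ENNReal.mul_inv (by simp) (by simp)]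
      gcongr
      have : r * (supNorm (wpIdx r y - wpIdx r y') + 1) ≤ supNorm (y - y') := by
        have hD := wp_idx_sub hy hy'
        have hpos := wp_supNorm_pos (sub_ne_zero.mpr hne.symm)
        generalize supNorm (wpIdx r y - wpIdx r y') = t at *
        have ht : 1 ≤ t := by
          rcases Nat.eq_zero_or_pos t with rfl | ht
          · omega
          · exact ht
        nlinarith
      exact_mod_cast this
    calc _ ≤ C1 * ((a (wpIdx r y - k0) + a (wpIdx r y' - k0)) * q) * (((r : ℝ≥0∞)⁻¹)^e * q) := mul_le_mul' hP hw
      _ = _ := by simp only [F, c, hb]; ring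
  have hb_sum1 : ∀ u, ∑' v, b (u - v) = S := fun u => by
    rw [hS]; exact (Equiv.subLeft u).tsum_eq b
  have hb_sum2 : ∀ v, ∑' u, b (u - v) = S := fun v => by
    rw [hS]; exact (Equiv.subRight v).tsum_eq b
  have ha_sum : ∑' u, a (u - k0) ≤ C2 * ((N:ℝ≥0∞)+1)^2 := by
    have : ∑' u, a (u - k0) = ∑' u, a u := (Equiv.subRight k0).tsum_eq a
    rw [this]; exact H2 N
  have hF : ∑' u, ∑' v, F u v ≤ 2 * (S * (C2 * ((N:ℝ≥0∞)+1)^2)) := by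
    have : ∑' u, ∑' v, F u v = (∑' u, a (u - k0)) * S + (∑' u, a (u - k0)) * S := by
      simp only [F, add_mul, ENNReal.tsum_add]
      congr 1
      · simp only [ENNReal.tsum_mul_left, hb_sum1, ENNReal.tsum_mul_right]
      · rw [ENNReal.tsum_comm]
        simp only [ENNReal.tsum_mul_left, hb_sum2, ENNReal.tsum_mul_right]
    rw [this, ← two_mul, mul_comm _ S]
    gcongr
  have hN : ((N:ℝ≥0∞)+1)^2 ≤ 4 * ((R : ℝ≥0∞) / r) ^ 2 := by
    have h1 : ((N:ℝ≥0∞)+1) ≤ 2 * ((R : ℝ≥0∞) / r) := by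
      have hr0 : (r : ℝ≥0∞) ≠ 0 := by simp; omega
      rw [← mul_div_assoc, ENNReal.le_div_iff_mul_le (Or.inl hr0) (Or.inl (by simp))]
      have h2 : R / r * r ≤ R := Nat.div_mul_le_self R r
      have : (N + 1) * r ≤ 2 * R := by
        show (R / r + 1) * r ≤ 2 * R
        rw [add_mul]; omega
      exact_mod_cast this
    calc _ ≤ (2 * ((R : ℝ≥0∞) / r))^2 := by gcongr
      _ = _ := by rw [mul_pow]; norm_num
  calc _ ≤ ∑' y : {y : Zd (e+2) // (∀ i, (10 * r : ℤ) ∣ y i) ∧ supNorm y ≤ 2 * R + r},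
        ∑' v, c * F (wpIdx r y.1) v := by
        refine ENNReal.tsum_le_tsum fun y => ?_
        refine le_trans (ENNReal.tsum_le_tsum fun y' =>
          hterm y.1 y'.1 y.2.1 y'.2.1.1 y.2.2 y'.2.1.2 y'.2.2) ?_
        refine ENNReal.tsum_comp_le_tsum_of_injective (f := fun y' :
          {y' : Zd (e+2) // ((∀ i, (10 * r : ℤ) ∣ y' i) ∧ supNorm y' ≤ 2 * R + r) ∧ y' ≠ y.1} => wpIdx r y'.1)
          (fun u v huv => Subtype.ext (hinj u.2.1.1 v.2.1.1 huv)) (fun v => c * F (wpIdx r y.1) v)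
    _ ≤ ∑' u, ∑' v, c * F u v :=
        ENNReal.tsum_comp_le_tsum_of_injective (f := fun y :
          {y : Zd (e+2) // (∀ i, (10 * r : ℤ) ∣ y i) ∧ supNorm y ≤ 2 * R + r} => wpIdx r y.1)
          (fun u v huv => Subtype.ext (hinj u.2.1 v.2.1 huv)) (fun u => ∑' v, c * F u v)
    _ = c * ∑' u, ∑' v, F u v := by simp only [ENNReal.tsum_mul_left]
    _ ≤ c * (2 * (S * (C2 * (4 * ((R : ℝ≥0∞) / r) ^ 2)))) := by
        gcongr
        exact hF.trans (by gcongr)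
    _ = _ := by simp only [c]; ring

end
end

section
/- Let ε > 0, δ ∈ (0, ε), and m(ℓ) = c·ln(ln ℓ)^ε/(ℓ³·ln ℓ)·1[ℓ ≥ ℓ₀] with ℓ₀ ≥ e^e chosen such that x ↦ x²·m(x) is decreasing on [ℓ₀*, ∞) for some ℓ₀* ≥ ℓ₀. Define R_n = exp(exp(n^{1/(1+δ)})). Then for any constants D_low, D_up, α, v > 0, one has Σ_{ℓ = D_low·R_n²}^{D_up·R_{n+1}²} ℓ²·m(ℓ) → ∞ as n → ∞; in particular the sum exceeds α/v for all sufficiently large n. -/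
open MeasureTheory ENNReal Filter

noncomputable section

lemma ll_step (l : ℕ) (hl : 3 ≤ l) :
    Real.log (Real.log ((l:ℝ)+1)) - Real.log (Real.log l) ≤ 1 / ((l:ℝ) * Real.log l) := by
  have h3 : (3:ℝ) ≤ l := by exact_mod_cast hl
  have hlog : 0 < Real.log l := Real.log_pos (by linarith)
  have hlog1 : 0 < Real.log ((l:ℝ)+1) := Real.log_pos (by linarith)
  have h1 : Real.log ((l:ℝ)+1) - Real.log l ≤ 1 / l := by
    rw [← Real.log_div (by linarith) (by linarith)]
    refine (Real.log_le_sub_one_of_pos (by positivity)).trans (le_of_eq ?_)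
    field_simp
    ring
  rw [← Real.log_div hlog1.ne' hlog.ne']
  refine (Real.log_le_sub_one_of_pos (by positivity)).trans ?_
  have : Real.log ((l:ℝ)+1) / Real.log l - 1 = (Real.log ((l:ℝ)+1) - Real.log l) / Real.log l := by
    field_simp
  rw [this, ← div_div]
  gcongr

lemma ll_sum (a b : ℕ) (ha : 3 ≤ a) (hb : 3 ≤ b + 1) :
    Real.log (Real.log ((b:ℝ)+1)) - Real.log (Real.log a)
      ≤ ∑ l ∈ Finset.Icc a b, 1 / ((l:ℝ) * Real.log l) := by
  have hI : Finset.Icc a b = Finset.Ico a (b+1) := by ext; simp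
  rw [hI]
  rcases le_total a (b+1) with h | h
  · have key : ∀ k, a ≤ k → Real.log (Real.log (k:ℝ)) - Real.log (Real.log a)
      ≤ ∑ l ∈ Finset.Ico a k, 1 / ((l:ℝ) * Real.log l) := by
      intro k hk
      induction k, hk using Nat.le_induction with
      | base => simp
      | succ k hk ih =>
        rw [Finset.sum_Ico_succ_top hk]
        have := ll_step k (by omega)
        push_cast
        linarith
    have := key (b+1) h
    push_cast at this
    exact this
  · rw [Finset.Ico_eq_empty (by omega), Finset.sum_empty]
    have h3 : (3:ℝ) ≤ (b:ℝ)+1 := by exact_mod_cast hb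
    have h4 : (b:ℝ)+1 ≤ a := by exact_mod_cast h
    have := Real.log_le_log (Real.log_pos (by linarith)) (Real.log_le_log (by linarith) h4)
    linarith

lemma gap (a : ℝ) (ha0 : 0 < a) (ha1 : a ≤ 1) (n : ℕ) :
    a * ((n:ℝ)+1) ^ (a-1) ≤ ((n:ℝ)+1)^a - (n:ℝ)^a := by
  have hN : (0:ℝ) < (n:ℝ)+1 := by positivity
  have h := rpow_one_add_le_one_add_mul_self (s := -(1/((n:ℝ)+1))) (p := a)
    (by rw [neg_le_neg_iff, div_le_one hN]; linarith [(Nat.cast_nonneg n : (0:ℝ) ≤ n)]) ha0.le ha1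
  have h2 : (n:ℝ) = ((n:ℝ)+1) * (1 + -(1/((n:ℝ)+1))) := by field_simp; ring
  have h3 : (n:ℝ)^a = ((n:ℝ)+1)^a * (1 + -(1/((n:ℝ)+1)))^a := by
    conv_lhs => rw [h2]
    rw [Real.mul_rpow hN.le]
    have : 1 + -(1/((n:ℝ)+1)) = n / ((n:ℝ)+1) := by field_simp; ring
    rw [this]; positivity
  have h4 : ((n:ℝ)+1)^(a-1) = ((n:ℝ)+1)^a * (1/((n:ℝ)+1)) := by
    rw [Real.rpow_sub hN, Real.rpow_one]; ring
  have hp : 0 < ((n:ℝ)+1)^a := by positivity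
  rw [h3, h4]
  nlinarith [mul_le_mul_of_nonneg_left h hp.le]

lemma gap_tendsto (ε δ : ℝ) (hδ : 0 < δ) (hδε : δ < ε) :
    Tendsto (fun n : ℕ => ((n:ℝ)^(1/(1+δ)))^ε * (((n:ℝ)+1)^(1/(1+δ)) - (n:ℝ)^(1/(1+δ))))
      atTop atTop := by
  set a := 1/(1+δ) with ha
  have ha0 : 0 < a := by positivity
  have ha1 : a ≤ 1 := by rw [ha, div_le_one (by linarith)]; linarith
  have hp : 0 < a*ε + (a-1) := by
    have : a*ε + (a-1) = (ε-δ)/(1+δ) := by rw [ha]; field_simp; ring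
    rw [this]; apply div_pos <;> linarith
  have ht : Tendsto (fun n : ℕ => (a * 2^(a-1)) * (n:ℝ)^(a*ε + (a-1))) atTop atTop :=
    Tendsto.const_mul_atTop (by positivity) ((tendsto_rpow_atTop hp).comp tendsto_natCast_atTop_atTop)
  refine tendsto_atTop_mono' _ ?_ ht
  filter_upwards [eventually_ge_atTop 1] with n hn
  have hn' : (1:ℝ) ≤ n := by exact_mod_cast hn
  have hn0 : (0:ℝ) < n := by linarith
  have h1 : (2*(n:ℝ))^(a-1) ≤ ((n:ℝ)+1)^(a-1) :=
    Real.rpow_le_rpow_of_nonpos (by linarith) (by linarith) (by linarith)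
  rw [Real.mul_rpow (by norm_num) hn0.le] at h1
  rw [Real.rpow_add hn0, ← Real.rpow_mul hn0.le]
  calc _ = (n:ℝ)^(a*ε) * (a * (2^(a-1) * (n:ℝ)^(a-1))) := by ring
    _ ≤ (n:ℝ)^(a*ε) * (a * ((n:ℝ)+1)^(a-1)) := by gcongr
    _ ≤ _ := by gcongr; exact gap a ha0 ha1 n

lemma upper_ll (s K : ℝ) (hK : 0 ≤ K) :
    Real.log (2 * Real.exp s + K) ≤ Real.log 2 + s + K * Real.exp (-s) := by
  have he := Real.exp_pos s
  have : 2 * Real.exp s + K = 2 * Real.exp s * (1 + K/2 * Real.exp (-s)) := by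
    rw [Real.exp_neg]; field_simp
  rw [this, Real.log_mul (by positivity) (by positivity), Real.log_mul (by norm_num) he.ne',
    Real.log_exp]
  have h := Real.log_le_sub_one_of_pos (x := 1 + K/2 * Real.exp (-s)) (by positivity)
  have : 0 ≤ K * Real.exp (-s) := by positivity
  linarith

lemma lower_ll (s L : ℝ) (hL : 0 ≤ L) (hs : L ≤ Real.exp s) :
    Real.log 2 + s - L * Real.exp (-s) ≤ Real.log (2 * Real.exp s - L) := by
  have he := Real.exp_pos s
  have h1 : L * Real.exp (-s) ≤ 1 := by
    rw [Real.exp_neg, ← div_eq_mul_inv, div_le_one he]; exact hs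
  have h0 : 0 ≤ L * Real.exp (-s) := by positivity
  have : 2 * Real.exp s - L = 2 * Real.exp s * (1 - (L * Real.exp (-s))/2) := by
    rw [Real.exp_neg]; field_simp
  have hpos : 0 < 1 - (L * Real.exp (-s))/2 := by linarith
  rw [this, Real.log_mul (by positivity) hpos.ne', Real.log_mul (by norm_num) he.ne',
    Real.log_exp]
  have h := Real.one_sub_inv_le_log_of_pos hpos
  have : (1 - (L * Real.exp (-s))/2)⁻¹ ≤ 1 + L * Real.exp (-s) := by
    rw [inv_le_iff_one_le_mul₀ hpos]
    nlinarith
  linarith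

theorem good_scales_from_loglog_tail (ε δ c : ℝ) (hε : 0 < ε) (hδ : 0 < δ) (hδε : δ < ε)
    (hc : 0 < c) (ℓ₀ : ℕ) (hℓ₀ : Real.exp (Real.exp 1) ≤ ℓ₀)
    (m : ℕ → ℝ)
    (hm : ∀ ℓ : ℕ, m ℓ =
      if ℓ₀ ≤ ℓ then c * (Real.log (Real.log ℓ)) ^ ε / ((ℓ : ℝ) ^ 3 * Real.log ℓ) else 0)
    (ℓ₀s : ℝ) (hℓ₀s : (ℓ₀ : ℝ) ≤ ℓ₀s)
    (hmono : ∀ x y : ℝ, ℓ₀s ≤ x → x ≤ y →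
      y ^ 2 * (c * (Real.log (Real.log y)) ^ ε / (y ^ 3 * Real.log y)) ≤
        x ^ 2 * (c * (Real.log (Real.log x)) ^ ε / (x ^ 3 * Real.log x)))
    (R : ℕ → ℝ) (hR : ∀ n, R n = Real.exp (Real.exp ((n : ℝ) ^ (1 / (1 + δ)))))
    (Dlow Dup α v : ℝ) (hDlow : 0 < Dlow) (hDup : 0 < Dup) (hα : 0 < α) (hv : 0 < v) :
    Tendsto (fun n => ∑ ℓ ∈ Finset.Icc ⌈Dlow * (R n) ^ 2⌉₊ ⌊Dup * (R (n + 1)) ^ 2⌋₊,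
        (ℓ : ℝ) ^ 2 * m ℓ) atTop atTop ∧
    ∀ᶠ n in atTop, α / v ≤
      ∑ ℓ ∈ Finset.Icc ⌈Dlow * (R n) ^ 2⌉₊ ⌊Dup * (R (n + 1)) ^ 2⌋₊, (ℓ : ℝ) ^ 2 * m ℓ := by
  suffices hT : Tendsto (fun n => ∑ ℓ ∈ Finset.Icc ⌈Dlow * (R n) ^ 2⌉₊ ⌊Dup * (R (n + 1)) ^ 2⌋₊,
        (ℓ : ℝ) ^ 2 * m ℓ) atTop atTop from ⟨hT, hT.eventually_ge_atTop _⟩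
  set a := 1/(1+δ) with ha
  have ha0 : 0 < a := by positivity
  set K := |Real.log (Dlow+1)| with hKdef
  set L := |Real.log Dup| with hLdef
  have hK : 0 ≤ K := abs_nonneg _
  have hL : 0 ≤ L := abs_nonneg _
  have hs : Tendsto (fun n : ℕ => (n:ℝ)^a) atTop atTop :=
    (tendsto_rpow_atTop ha0).comp tendsto_natCast_atTop_atTop
  have hes := Real.tendsto_exp_atTop.comp hs
  have hees := Real.tendsto_exp_atTop.comp hes
  have herr : Tendsto (fun n : ℕ => (K+L) * (((n:ℝ)^a)^ε * Real.exp (-((n:ℝ)^a)))) atTop (nhds 0) := by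
    have h := (tendsto_rpow_mul_exp_neg_mul_atTop_nhds_zero ε 1 one_pos).comp hs
    have h' := h.const_mul (K+L)
    simpa [Function.comp_def] using h'
  have hmain := (tendsto_atTop_add_const_right atTop (-1 : ℝ)
    (gap_tendsto ε δ hδ hδε)).const_mul_atTop hc
  refine tendsto_atTop_mono' _ ?_ hmain
  filter_upwards [hes.eventually_ge_atTop |Real.log Dlow|, hes.eventually_ge_atTop L,
    hees.eventually_ge_atTop 3, hees.eventually_ge_atTop (ℓ₀:ℝ),
    herr.eventually_le_const one_pos, hs.eventually_ge_atTop 0] with n h1 h2 h3 h4 h5 h6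
  simp only [Function.comp_apply] at h1 h2 h3 h4
  rw [← ha]
  have hR1 : R (n+1) = Real.exp (Real.exp (((n:ℝ)+1)^a)) := by rw [hR]; push_cast; rfl
  have hR0 : R n = Real.exp (Real.exp ((n:ℝ)^a)) := hR n
  have hss : (n:ℝ)^a ≤ ((n:ℝ)+1)^a :=
    Real.rpow_le_rpow (Nat.cast_nonneg n) (by linarith) ha0.le
  generalize (n:ℝ)^a = s at *
  generalize ((n:ℝ)+1)^a = s' at *
  have hsq : ∀ t : ℝ, (Real.exp (Real.exp t))^2 = Real.exp (2 * Real.exp t) := by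
    intro t; rw [← Real.exp_nat_mul]; norm_num
  have hlogD : ∀ D t : ℝ, 0 < D →
      Real.log (D * (Real.exp (Real.exp t))^2) = 2 * Real.exp t + Real.log D := by
    intro D t hD
    rw [hsq, Real.log_mul hD.ne' (Real.exp_pos _).ne', Real.log_exp]; ring
  have hes' : Real.exp s ≤ Real.exp s' := Real.exp_le_exp.mpr hss
  rw [hR0, hR1]
  have hRpos : ∀ t : ℝ, 0 < (Real.exp (Real.exp t))^2 := fun t => by positivity
  have hA : Real.exp (Real.exp s) ≤ Dlow * (Real.exp (Real.exp s))^2 := by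
    rw [← Real.le_log_iff_exp_le (mul_pos hDlow (hRpos s)), hlogD _ _ hDlow]
    linarith [neg_abs_le (Real.log Dlow)]
  have hB : Real.exp (Real.exp s) ≤ Dup * (Real.exp (Real.exp s'))^2 := by
    rw [← Real.le_log_iff_exp_le (mul_pos hDup (hRpos s')), hlogD _ _ hDup]
    linarith [neg_abs_le (Real.log Dup)]
  set A := Dlow * (Real.exp (Real.exp s))^2 with hAdef
  set B := Dup * (Real.exp (Real.exp s'))^2 with hBdef
  have hceil : A ≤ (⌈A⌉₊:ℝ) := Nat.le_ceil A
  have hceil2 : (⌈A⌉₊:ℝ) < A + 1 := Nat.ceil_lt_add_one (by linarith)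
  have hfl : B < (⌊B⌋₊:ℝ) + 1 := Nat.lt_floor_add_one B
  have hA3 : 3 ≤ ⌈A⌉₊ := by
    have : (3:ℝ) ≤ (⌈A⌉₊:ℝ) := by linarith
    exact_mod_cast this
  have hB3 : 3 ≤ ⌊B⌋₊ + 1 := by
    have : (3:ℝ) ≤ (⌊B⌋₊:ℝ) + 1 := by linarith
    exact_mod_cast this
  have hsum := ll_sum ⌈A⌉₊ ⌊B⌋₊ hA3 hB3
  -- upper bound on the lower end
  have hup : Real.log (Real.log (⌈A⌉₊:ℝ)) ≤ Real.log 2 + s + K * Real.exp (-s) := by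
    refine le_trans ?_ (upper_ll s K hK)
    apply Real.log_le_log (Real.log_pos (by linarith))
    have h1R : 1 ≤ (Real.exp (Real.exp s))^2 := one_le_pow₀ (by linarith)
    have : (⌈A⌉₊:ℝ) ≤ (Dlow+1) * (Real.exp (Real.exp s))^2 := by
      rw [add_mul]; linarith
    refine (Real.log_le_log (by linarith) this).trans ?_
    rw [hlogD _ _ (by linarith)]
    linarith [le_abs_self (Real.log (Dlow+1))]
  have hlow : Real.log 2 + s' - L * Real.exp (-s') ≤ Real.log (Real.log ((⌊B⌋₊:ℝ)+1)) := by
    refine (lower_ll s' L hL (by linarith)).trans ?_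
    apply Real.log_le_log
    · linarith [Real.exp_pos s']
    · have := Real.log_le_log (by linarith) hfl.le
      rw [hBdef, hlogD _ _ hDup] at this
      rw [hBdef]
      linarith [neg_abs_le (Real.log Dup)]
  have hexp : L * Real.exp (-s') ≤ L * Real.exp (-s) := by gcongr
  have hterm : ∑ l ∈ Finset.Icc ⌈A⌉₊ ⌊B⌋₊, (c * s^ε) * (1 / ((l:ℝ) * Real.log l))
      ≤ ∑ l ∈ Finset.Icc ⌈A⌉₊ ⌊B⌋₊, (l:ℝ)^2 * m l := by
    apply Finset.sum_le_sum
    intro l hl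
    have hl' : (⌈A⌉₊:ℝ) ≤ l := by exact_mod_cast (Finset.mem_Icc.mp hl).1
    have hl0 : ℓ₀ ≤ l := by
      have : (ℓ₀:ℝ) ≤ l := by linarith
      exact_mod_cast this
    have hlpos : (0:ℝ) < l := by linarith
    have hlog : Real.exp s ≤ Real.log l := by
      rw [Real.le_log_iff_exp_le hlpos]; linarith
    have hlogpos : 0 < Real.log l := (Real.exp_pos s).trans_le hlog
    have hll : s ≤ Real.log (Real.log l) := by
      rw [Real.le_log_iff_exp_le hlogpos]; exact hlog
    rw [hm, if_pos hl0]
    have : (l:ℝ)^2 * (c * (Real.log (Real.log l))^ε / ((l:ℝ)^3 * Real.log l))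
        = (c * (Real.log (Real.log l))^ε) * (1 / ((l:ℝ) * Real.log l)) := by
      field_simp
    rw [this]
    gcongr
  rw [← Finset.mul_sum] at hterm
  refine le_trans ?_ hterm
  have hsε : 0 ≤ s^ε := Real.rpow_nonneg h6 _
  have hfin : s' - s - (K+L) * Real.exp (-s) ≤
      ∑ l ∈ Finset.Icc ⌈A⌉₊ ⌊B⌋₊, 1 / ((l:ℝ) * Real.log l) := by linarith
  rw [mul_assoc]
  refine mul_le_mul_of_nonneg_left ?_ hc.le
  refine le_trans ?_ (mul_le_mul_of_nonneg_left hfin hsε)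
  linarith

end
end

section
/- Consider the exploration process on Z^d defined via a fixed ordering of edges and {0,1}-valued random variables σ(t): at each step the minimal unexplored edge adjacent to the current good cluster is examined and its new endpoint declared good if σ(t+1) = 1, bad otherwise. If there is a constant θ with p_c^{site}(Z^d) < θ < 1 such that P(σ(0)=1) ≥ θ and P(σ(t+1)=1 | σ(0),…,σ(t)) ≥ θ for all t, then with positive probability the limiting set G_∞ of good vertices is infinite. -/
open MeasureTheory ENNReal Filter

noncomputable section

/-! ### Combinatorics of the exploration -/

/-- The exploration with good set `s.1` and bad set `s.2` can still proceed. -/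
def NFS {d : ℕ} (s : Finset (Zd d) × Finset (Zd d)) : Prop :=
  ∃ u ∈ s.1, ∃ w ∈ nbrs u, w ∉ s.1 ∧ w ∉ s.2

lemma explore_congr {d : ℕ} (emb : (Zd d × Zd d) ↪ ℕ) (t : ℕ) :
    ∀ (b b' : ℕ → Bool), (∀ s ≤ t, b' s = b s) → explore emb b' t = explore emb b t := by
  induction t with
  | zero => intro b b' h; simp only [explore, h 0 le_rfl]
  | succ t ih =>
    intro b b' h
    have h1 := ih b b' (fun s hs => h s (by omega))
    simp only [explore, h1, h (t+1) le_rfl]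

lemma explore_succ_frozen {d : ℕ} (emb : (Zd d × Zd d) ↪ ℕ) (b : ℕ → Bool) (t : ℕ)
    (h : ¬ NFS (explore emb b t)) : explore emb b (t+1) = explore emb b t := by
  rw [explore]
  dsimp only
  rw [dif_neg]
  rintro ⟨⟨u, w⟩, he⟩
  simp only [Finset.mem_biUnion, Finset.mem_image, Finset.mem_filter] at he
  obtain ⟨u', hu', w', ⟨hw, hw2⟩, _⟩ := he
  exact h ⟨u', hu', w', hw, hw2⟩

open Classical in
lemma explore_succ_nf {d : ℕ} (emb : (Zd d × Zd d) ↪ ℕ) (b : ℕ → Bool) (t : ℕ)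
    (h : NFS (explore emb b t)) :
    ∃ e, e ∉ (explore emb b t).1 ∧ e ∉ (explore emb b t).2 ∧
      (∃ u ∈ (explore emb b t).1, e ∈ nbrs u) ∧
      ∀ b' : ℕ → Bool, (∀ s ≤ t, b' s = b s) →
        explore emb b' (t+1) = if b' (t+1) then (insert e (explore emb b t).1, (explore emb b t).2)
          else ((explore emb b t).1, insert e (explore emb b t).2) := by
  obtain ⟨u, hu, w, hw, hw2⟩ := h
  have hne : ((explore emb b t).1.biUnion fun u =>
      ((nbrs u).filter fun w => w ∉ (explore emb b t).1 ∧ w ∉ (explore emb b t).2).image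
        fun w => (u, w)).Nonempty := by
    refine ⟨(u, w), ?_⟩
    simp only [Finset.mem_biUnion, Finset.mem_image, Finset.mem_filter]
    exact ⟨u, hu, w, ⟨hw, hw2⟩, rfl⟩
  have hc := (Finset.exists_min_image _ (fun p => emb p) hne).choose_spec.1
  generalize hq : (Finset.exists_min_image _ (fun p => emb p) hne).choose = q at hc
  simp only [Finset.mem_biUnion, Finset.mem_image, Finset.mem_filter] at hc
  obtain ⟨u', hu', w', ⟨hw', hw2'⟩, heq⟩ := hc
  refine ⟨w', hw2'.1, hw2'.2, ⟨u', hu', hw'⟩, ?_⟩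
  intro b' hb'
  have hw'' : w' = (Finset.exists_min_image _ (fun p => emb p) hne).choose.2 := by
    rw [hq, ← heq]
  rw [hw'', explore]
  dsimp only
  simp only [explore_congr emb t b b' hb']
  rw [dif_pos hne]

lemma explore_zero_mem {d : ℕ} (emb : (Zd d × Zd d) ↪ ℕ) (b : ℕ → Bool) (t : ℕ) :
    (0 : Zd d) ∈ (explore emb b t).1 ∨ (0 : Zd d) ∈ (explore emb b t).2 := by
  induction t with
  | zero => by_cases h : b 0 <;> simp [explore, h]
  | succ t ih =>
    by_cases h : NFS (explore emb b t)
    · obtain ⟨e, -, -, -, he⟩ := explore_succ_nf emb b t h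
      rw [he b (fun _ _ => rfl)]
      split_ifs <;> simp only [Finset.mem_insert] <;> tauto
    · rw [explore_succ_frozen emb b t h]; exact ih

lemma explore_mono {d : ℕ} (emb : (Zd d × Zd d) ↪ ℕ) (b : ℕ → Bool) (t : ℕ) :
    (explore emb b t).1 ⊆ (explore emb b (t+1)).1 := by
  by_cases h : NFS (explore emb b t)
  · obtain ⟨e, -, -, -, he⟩ := explore_succ_nf emb b t h
    rw [he b (fun _ _ => rfl)]
    split_ifs
    · exact Finset.subset_insert _ _
    · exact subset_rfl
  · rw [explore_succ_frozen emb b t h]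

lemma explore_bad {d : ℕ} (emb : (Zd d × Zd d) ↪ ℕ) (b : ℕ → Bool) (t : ℕ) :
    ∀ x ∈ (explore emb b t).2, x = 0 ∨ ∃ u ∈ (explore emb b t).1, x ∈ nbrs u := by
  induction t with
  | zero => by_cases h : b 0 <;> simp [explore, h]
  | succ t ih =>
    have hm := explore_mono emb b t
    intro x hx
    have key : x ∈ (explore emb b t).2 ∨ ∃ u ∈ (explore emb b t).1, x ∈ nbrs u := by
      by_cases h : NFS (explore emb b t)
      · obtain ⟨e, -, -, hu, he⟩ := explore_succ_nf emb b t h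
        rw [he b (fun _ _ => rfl)] at hx
        split_ifs at hx
        · exact Or.inl hx
        · rcases Finset.mem_insert.1 hx with rfl | hx
          · exact Or.inr hu
          · exact Or.inl hx
      · rw [explore_succ_frozen emb b t h] at hx; exact Or.inl hx
    rcases key with h | ⟨u, hu, hx⟩
    · rcases ih x h with h | ⟨u, hu, hx⟩
      · exact Or.inl h
      · exact Or.inr ⟨u, hm hu, hx⟩
    · exact Or.inr ⟨u, hm hu, hx⟩

lemma explore_card {d : ℕ} (emb : (Zd d × Zd d) ↪ ℕ) (b : ℕ → Bool)
    (h : ∀ t, NFS (explore emb b t)) (t : ℕ) :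
    ((explore emb b t).1 ∪ (explore emb b t).2).card = t + 1 := by
  induction t with
  | zero => by_cases h : b 0 <;> simp [explore, h]
  | succ t ih =>
    obtain ⟨e, h1, h2, hu, he⟩ := explore_succ_nf emb b t (h t)
    rw [he b (fun _ _ => rfl), ← ih]
    split_ifs
    · simp only [Finset.insert_union]
      rw [Finset.card_insert_of_notMem (by simp [h1, h2])]
    · simp only [Finset.union_insert]
      rw [Finset.card_insert_of_notMem (by simp [h1, h2])]

lemma explore_infinite {d : ℕ} (emb : (Zd d × Zd d) ↪ ℕ) (b : ℕ → Bool)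
    (h : ∀ t, NFS (explore emb b t)) :
    Set.Infinite (⋃ t, ((explore emb b t).1 : Set (Zd d))) := by
  intro hfin
  set F := hfin.toFinset with hF
  have hsub : ∀ t, (explore emb b t).1 ⊆ F := by
    intro t x hx
    rw [hF, Set.Finite.mem_toFinset]
    exact Set.mem_iUnion.2 ⟨t, hx⟩
  have hsub2 : ∀ t, (explore emb b t).1 ∪ (explore emb b t).2 ⊆ insert 0 (F ∪ F.biUnion nbrs) := by
    intro t x hx
    rcases Finset.mem_union.1 hx with hx | hx
    · exact Finset.mem_insert_of_mem (Finset.mem_union_left _ (hsub t hx))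
    · rcases explore_bad emb b t x hx with rfl | ⟨u, hu, hx⟩
      · exact Finset.mem_insert_self _ _
      · exact Finset.mem_insert_of_mem (Finset.mem_union_right _
          (Finset.mem_biUnion.2 ⟨u, hsub t hu, hx⟩))
  have := Finset.card_le_card (hsub2 (insert 0 (F ∪ F.biUnion nbrs)).card)
  rw [explore_card emb b h] at this
  omega

lemma nfs_antitone {d : ℕ} (emb : (Zd d × Zd d) ↪ ℕ) (b : ℕ → Bool) (t : ℕ)
    (h : NFS (explore emb b (t+1))) : NFS (explore emb b t) := by
  by_contra hn
  rw [explore_succ_frozen emb b t hn] at h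
  exact hn h

lemma mem_nbrs_of_isNbr {d : ℕ} {x y : Zd d} (h : IsNbr x y) : y ∈ nbrs x := by
  unfold IsNbr at h
  have hex : ∃ i, |x i - y i| ≠ 0 := by
    by_contra hc
    push Not at hc
    simp [hc] at h
  obtain ⟨i, hi⟩ := hex
  have hi1 : 1 ≤ |x i - y i| := by have := abs_nonneg (x i - y i); omega
  rw [← Finset.add_sum_erase _ _ (Finset.mem_univ i)] at h
  have hnn : ∀ j ∈ Finset.univ.erase i, 0 ≤ |x j - y j| := fun j _ => abs_nonneg _
  have hs := Finset.sum_nonneg hnn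
  have hs0 : ∑ j ∈ Finset.univ.erase i, |x j - y j| = 0 := by omega
  rw [Finset.sum_eq_zero_iff_of_nonneg hnn] at hs0
  have hi2 : |x i - y i| = 1 := by omega
  refine Finset.mem_image.2 ⟨(i, decide (x i < y i)), Finset.mem_univ _, ?_⟩
  funext j
  simp only [Pi.add_apply, stepVec]
  by_cases hj : j = i
  · subst hj
    rcases abs_eq (zero_le_one) |>.1 hi2 with h1 | h1
    · have : ¬ x j < y j := by omega
      simp [this]; omega
    · have : x j < y j := by omega
      simp [this]; omega
  · have := hs0 j (by simp [hj])
    rw [abs_eq_zero] at this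
    simp [hj]; omega

/-! ### Clusters -/

/-- The cluster of `x` in the configuration `η` is infinite. -/
def InfAt {d : ℕ} (x : Zd d) : Set (Zd d → Bool) :=
  {η | {y | ConnIn {z | η z = true} x y}.Infinite}

lemma ConnIn.mono {d : ℕ} {S T : Set (Zd d)} (h : S ⊆ T) {x y : Zd d} (hc : ConnIn S x y) :
    ConnIn T x y := by
  obtain ⟨n, γ, h0, h1, h2, h3⟩ := hc
  exact ⟨n, γ, h0, h1, h2, fun t ht => h (h3 t ht)⟩

lemma connIn_iff_finset {d : ℕ} (S : Set (Zd d)) (x y : Zd d) :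
    ConnIn S x y ↔ ∃ F : Finset (Zd d), (∀ a ∈ F, a ∈ S) ∧ ConnIn (F : Set (Zd d)) x y := by
  constructor
  · rintro ⟨n, γ, h0, h1, h2, h3⟩
    refine ⟨(Finset.range (n+1)).image γ, ?_, n, γ, h0, h1, h2, ?_⟩
    · intro a ha
      obtain ⟨t, ht, rfl⟩ := Finset.mem_image.1 ha
      exact h3 t (by have := Finset.mem_range.1 ht; omega)
    · intro t ht
      exact Finset.mem_coe.2 (Finset.mem_image_of_mem _ (Finset.mem_range.2 (by omega)))
  · rintro ⟨F, hF, hc⟩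
    exact hc.mono hF

lemma measurableSet_infAt {d : ℕ} (x : Zd d) : MeasurableSet (InfAt x) := by
  have hconn : ∀ y, MeasurableSet {η : Zd d → Bool | ConnIn {z | η z = true} x y} := by
    intro y
    have : {η : Zd d → Bool | ConnIn {z | η z = true} x y} =
        ⋃ F : Finset (Zd d), ⋃ (_ : ConnIn (F : Set (Zd d)) x y),
          ⋂ a ∈ F, {η : Zd d → Bool | η a = true} := by
      ext η
      rw [Set.mem_ofPred_eq, connIn_iff_finset]
      simp only [Set.mem_ofPred_eq, Set.mem_iUnion, Set.mem_iInter, exists_prop]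
      exact exists_congr fun F => and_comm
    rw [this]
    refine MeasurableSet.iUnion fun F => MeasurableSet.iUnion fun _ =>
      Finset.measurableSet_biInter _ fun a _ => ?_
    have hma : Measurable (fun η : Zd d → Bool => η a) := measurable_pi_apply a
    exact hma (measurableSet_singleton true)
  have : InfAt x = ⋂ F : Finset (Zd d), ⋃ y : Zd d, ⋃ (_ : y ∉ F),
      {η : Zd d → Bool | ConnIn {z | η z = true} x y} := by
    ext η
    simp only [InfAt, Set.mem_ofPred_eq, Set.mem_iInter, Set.mem_iUnion]
    constructor
    · intro h F
      obtain ⟨y, hy, hF⟩ := h.exists_notMem_finset F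
      exact ⟨y, hF, hy⟩
    · intro h hfin
      obtain ⟨y, hy, hc⟩ := h hfin.toFinset
      exact hy (hfin.mem_toFinset.2 hc)
  rw [this]
  exact MeasurableSet.iInter fun F => MeasurableSet.iUnion fun y => MeasurableSet.iUnion fun _ =>
    hconn y

lemma infAt_mono {d : ℕ} {x : Zd d} {η η' : Zd d → Bool} (h : ∀ z, η z = true → η' z = true)
    (hη : η ∈ InfAt x) : η' ∈ InfAt x :=
  Set.Infinite.mono (fun _ hy => ConnIn.mono h hy) hη

/-- Force the configuration to be open on the good set and closed on the bad set. -/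
def force {d : ℕ} (s : Finset (Zd d) × Finset (Zd d)) (η : Zd d → Bool) : Zd d → Bool :=
  fun x => if x ∈ s.2 then false else if x ∈ s.1 then true else η x

lemma force_frozen {d : ℕ} (s : Finset (Zd d) × Finset (Zd d)) (h : ¬ NFS s)
    (h0 : (0 : Zd d) ∈ s.1 ∨ (0 : Zd d) ∈ s.2) (η : Zd d → Bool) : force s η ∉ InfAt 0 := by
  intro hinf
  refine hinf (s.1.finite_toSet.subset ?_)
  rintro y ⟨n, γ, hγ0, hγn, hstep, hS⟩
  have hnotB : ∀ t ≤ n, γ t ∉ s.2 := by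
    intro t ht hb
    have := hS t ht
    simp [force, hb] at this
  have : ∀ t ≤ n, γ t ∈ s.1 := by
    intro t
    induction t with
    | zero =>
      intro _
      rcases h0 with h0 | h0
      · rwa [hγ0]
      · exact absurd (hγ0 ▸ h0) (hnotB 0 (Nat.zero_le _))
    | succ t ih =>
      intro ht
      by_contra hc
      exact h ⟨γ t, ih (by omega), γ (t+1), mem_nbrs_of_isNbr (hstep t (by omega)), hc,
        hnotB _ ht⟩
  rw [← hγn]
  exact this n le_rfl

/-! ### Bernoulli site percolation -/

/-- The Bernoulli measure on `Bool`. -/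
def bern (p : ℝ≥0∞) : Measure Bool := p • Measure.dirac true + (1 - p) • Measure.dirac false

lemma bern_prob {p : ℝ≥0∞} (hp : p ≤ 1) : IsProbabilityMeasure (bern p) := by
  constructor
  simp [bern, hp]

lemma bern_true (p : ℝ≥0∞) : bern p {true} = p := by simp [bern]

lemma bern_false (p : ℝ≥0∞) : bern p {false} = 1 - p := by simp [bern]

/-- Bernoulli site percolation measure. -/
def site (d : ℕ) (p : ℝ≥0∞) : Measure (Zd d → Bool) := Measure.infinitePi fun _ => bern p

lemma site_prob (d : ℕ) {p : ℝ≥0∞} (hp : p ≤ 1) : IsProbabilityMeasure (site d p) := by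
  have := bern_prob hp
  unfold site; infer_instance

lemma site_bernoulli (d : ℕ) {p : ℝ≥0∞} (hp : p ≤ 1) : IsBernoulliSite (site d p) p := by
  have := bern_prob hp
  intro A B hAB
  have : {η : Zd d → Bool | (∀ a ∈ A, η a = true) ∧ ∀ b ∈ B, η b = false} =
      Set.pi ((A ∪ B : Finset (Zd d)) : Set (Zd d))
        (fun x => if x ∈ A then ({true} : Set Bool) else {false}) := by
    ext η
    simp only [Set.mem_ofPred_eq, Set.mem_pi, Finset.mem_coe, Finset.mem_union]
    constructor
    · rintro ⟨h1, h2⟩ x hx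
      by_cases hxA : x ∈ A
      · simp [hxA, h1 x hxA]
      · simp [hxA, h2 x (hx.resolve_left hxA)]
    · intro h
      refine ⟨fun a ha => by simpa [ha] using h a (Or.inl ha), fun b hb => ?_⟩
      have hbA : b ∉ A := fun hA => Finset.disjoint_left.1 hAB hA hb
      simpa [hbA] using h b (Or.inr hb)
  rw [this, site, Measure.infinitePi_pi _ (fun i _ => MeasurableSet.of_discrete),
    Finset.prod_union hAB]
  congr 1
  · rw [Finset.prod_congr rfl (g := fun _ => p) (fun x hx => by simp [hx, bern_true])]
    simp
  · rw [Finset.prod_congr rfl (g := fun _ => 1 - p) (fun x hx => by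
      have hbA : x ∉ A := fun hA => Finset.disjoint_left.1 hAB hA hx
      simp [hbA, bern_false])]
    simp

lemma site_shift (d : ℕ) {p : ℝ≥0∞} (hp : p ≤ 1) (x : Zd d) :
    (site d p).map (fun η y => η (y + x)) = site d p := by
  have := bern_prob hp
  refine Measure.eq_infinitePi _ ?_
  intro s t ht
  have hc : ∀ y, t (y + x - x) = t y := fun y => congrArg t (add_sub_cancel_right y x)
  have hm : Measurable (fun (η : Zd d → Bool) (y : Zd d) => η (y + x)) :=
    measurable_pi_lambda _ fun y => measurable_pi_apply _
  rw [Measure.map_apply hm (MeasurableSet.pi s.countable_toSet fun i _ => ht i)]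
  have : (fun (η : Zd d → Bool) (y : Zd d) => η (y + x)) ⁻¹' (Set.pi (s : Set (Zd d)) t) =
      Set.pi ((s.image (fun y => y + x) : Finset (Zd d)) : Set (Zd d)) (fun z => t (z - x)) := by
    ext η
    simp only [Set.mem_pi, Set.mem_preimage, Finset.mem_coe, Finset.forall_mem_image]
    exact forall_congr' fun y => by rw [hc y]
  rw [this, site, Measure.infinitePi_pi _ (fun i _ => ht _),
    Finset.prod_image (fun a _ b _ h => add_right_cancel h)]
  exact Finset.prod_congr rfl fun y _ => by rw [hc y]

lemma connIn_shift {d : ℕ} (η : Zd d → Bool) (x y : Zd d)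
    (h : ConnIn {z | η z = true} x y) : ConnIn {z | η (z + x) = true} 0 (y - x) := by
  obtain ⟨n, γ, h0, h1, h2, h3⟩ := h
  refine ⟨n, fun t => γ t - x, by simp [h0], by simp [h1], fun t ht => ?_, fun t ht => ?_⟩
  · have := h2 t ht
    simpa [IsNbr] using this
  · simpa using h3 t ht

lemma site_infAt_zero (d : ℕ) {p : ℝ≥0∞} (hp : p ≤ 1)
    (h : site d p {η | PercSet {x | η x = true}} = 1) : 0 < site d p (InfAt 0) := by
  rw [pos_iff_ne_zero]
  intro h0
  have hx : ∀ x : Zd d, site d p (InfAt x) = 0 := by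
    intro x
    have hm : Measurable (fun (η : Zd d → Bool) (y : Zd d) => η (y + x)) :=
      measurable_pi_lambda _ fun y => measurable_pi_apply _
    rw [← site_shift d hp x, Measure.map_apply hm (measurableSet_infAt 0)] at h0
    refine measure_mono_null ?_ h0
    intro η hη
    refine Set.Infinite.mono ?_ (Set.Infinite.image (sub_left_injective (b := x)).injOn hη)
    rintro _ ⟨y, hy, rfl⟩
    exact connIn_shift η x y hy
  have : site d p {η | PercSet {x | η x = true}} = 0 := by
    refine measure_mono_null (t := ⋃ x : Zd d, InfAt x) ?_ (measure_iUnion_null hx)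
    rintro η ⟨x, _, hinf⟩
    exact Set.mem_iUnion.2 ⟨x, hinf⟩
  rw [this] at h
  exact zero_ne_one h

/-- Conditional probability that the origin is in an infinite cluster. -/
def uval (d : ℕ) (p : ℝ≥0∞) (s : Finset (Zd d) × Finset (Zd d)) : ℝ≥0∞ :=
  site d p (force s ⁻¹' InfAt 0)

lemma site_indep (d : ℕ) {p : ℝ≥0∞} (hp : p ≤ 1) (s : Finset (Zd d) × Finset (Zd d)) (e : Zd d)
    (he : e ∈ s.1 ∨ e ∈ s.2) (c : Bool) :
    site d p ({η | η e = c} ∩ force s ⁻¹' InfAt 0) = bern p {c} * uval d p s := by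
  have hb := bern_prob hp
  have hs := site_prob d hp
  have hind : ProbabilityTheory.iIndepFun (fun (i : Zd d) (η : Zd d → Bool) => η i) (site d p) := by
    have := ProbabilityTheory.iIndepFun_infinitePi (P := fun _ : Zd d => bern p)
      (X := fun _ (b : Bool) => b) (fun _ => measurable_id)
    exact this
  have h2 := ProbabilityTheory.indep_iSup_of_disjoint
    (fun i => (measurable_pi_apply i).comap_le) hind.iIndep
    (S := {e}) (T := {e}ᶜ) disjoint_compl_right
  have h3 := (ProbabilityTheory.Indep_iff _ _ _).1 h2 {η | η e = c} (force s ⁻¹' InfAt 0) ?_ ?_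
  · rw [h3, uval]
    congr 1
    have h4 := Measure.infinitePi_pi (fun _ : Zd d => bern p) (s := {e}) (t := fun _ => {c})
      (fun _ _ => MeasurableSet.of_discrete)
    simp only [Finset.prod_singleton] at h4
    rw [← h4, site]
    congr 1
    ext η
    simp
  · have hle : MeasurableSpace.comap (fun η : Zd d → Bool => η e) inferInstance ≤
        ⨆ i ∈ ({e} : Set (Zd d)),
          MeasurableSpace.comap (fun η : Zd d → Bool => η i) inferInstance :=
      le_iSup₂_of_le e (Set.mem_singleton e) le_rfl
    exact hle _ ⟨{c}, MeasurableSet.of_discrete, rfl⟩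
  · have hmeas : Measurable[⨆ i ∈ ({e}ᶜ : Set (Zd d)),
        MeasurableSpace.comap (fun η : Zd d → Bool => η i) inferInstance] (force s) := by
      refine @measurable_pi_lambda _ _ _ (_) _ _ fun x => ?_
      by_cases hx2 : x ∈ s.2
      · simp only [force, hx2, if_true]
        exact @measurable_const _ _ _ (_) _
      · by_cases hx1 : x ∈ s.1
        · simp only [force, hx2, hx1, if_true, if_false]
          exact @measurable_const _ _ _ (_) _
        · simp only [force, hx2, hx1, if_false]
          have hxe : x ∈ ({e}ᶜ : Set (Zd d)) := by
            rintro rfl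
            tauto
          refine measurable_iff_comap_le.2 ?_
          exact le_iSup₂_of_le x hxe le_rfl
    exact hmeas (measurableSet_infAt 0)

lemma uval_split (d : ℕ) {p : ℝ≥0∞} (hp : p ≤ 1) (G B : Finset (Zd d)) (e : Zd d)
    (h1 : e ∉ G) (h2 : e ∉ B) :
    uval d p (G, B) ≤ p * uval d p (insert e G, B) + (1 - p) * uval d p (G, insert e B) := by
  have e1 := site_indep d hp (insert e G, B) e (Or.inl (Finset.mem_insert_self _ _)) true
  have e2 := site_indep d hp (G, insert e B) e (Or.inr (Finset.mem_insert_self _ _)) false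
  rw [bern_true] at e1
  rw [bern_false] at e2
  rw [← e1, ← e2]
  refine (measure_mono ?_).trans (measure_union_le _ _)
  intro η hη
  by_cases he : η e = true
  · left
    refine ⟨he, ?_⟩
    have : force (insert e G, B) η = force (G, B) η := by
      funext x
      by_cases hx : x = e
      · subst hx; simp [force, h1, h2, he]
      · simp [force, hx]
    rw [Set.mem_preimage, this]; exact hη
  · right
    have he' : η e = false := by simpa using he
    refine ⟨he', ?_⟩
    have : force (G, insert e B) η = force (G, B) η := by
      funext x
      by_cases hx : x = e
      · subst hx; simp [force, h1, h2, he']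
      · simp [force, hx]
    rw [Set.mem_preimage, this]; exact hη

lemma uval_mono (d : ℕ) (p : ℝ≥0∞) (G B : Finset (Zd d)) (e : Zd d) :
    uval d p (G, insert e B) ≤ uval d p (insert e G, B) := by
  refine measure_mono fun η hη => infAt_mono (fun z hz => ?_) hη
  revert hz
  simp only [force, Finset.mem_insert]
  by_cases h1 : z = e <;> by_cases h2 : z ∈ B <;> by_cases h3 : z ∈ G <;> simp [h1, h2, h3]

lemma ennreal_step {p θ a b q q1 q0 : ℝ≥0∞} (hp : p ≤ 1) (hpθ : p ≤ θ) (hab : b ≤ a)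
    (hq : q = q1 + q0) (hq1 : θ * q ≤ q1) : (p * a + (1 - p) * b) * q ≤ a * q1 + b * q0 := by
  obtain ⟨δ, rfl⟩ := exists_add_of_le hab
  have h1 : p * (b + δ) + (1 - p) * b = b + p * δ := by
    rw [mul_add, add_right_comm, ← add_mul, add_tsub_cancel_of_le hp, one_mul]
  rw [h1]
  calc (b + p * δ) * q = b * q + δ * (p * q) := by ring
    _ ≤ b * q + δ * q1 := by gcongr; exact (mul_le_mul_left hpθ q).trans hq1
    _ = (b + δ) * q1 + b * q0 := by rw [hq]; ring

/-- The prefix event. -/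
def pre {Ω : Type*} (σ : ℕ → Ω → Bool) (b : ℕ → Bool) (t : ℕ) : Set Ω :=
  {ω | ∀ s ≤ t, σ s ω = b s}

lemma measurableSet_pre {Ω : Type*} [MeasurableSpace Ω] (σ : ℕ → Ω → Bool)
    (hσ : ∀ t, Measurable (σ t)) (b : ℕ → Bool) (t : ℕ) : MeasurableSet (pre σ b t) := by
  have : pre σ b t = ⋂ s ∈ Finset.range (t+1), σ s ⁻¹' {b s} := by
    ext ω; simp [pre]
  rw [this]
  exact Finset.measurableSet_biInter _ fun s _ => hσ s (measurableSet_singleton _)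

lemma pre_update {Ω : Type*} (σ : ℕ → Ω → Bool) (b : ℕ → Bool) (t : ℕ) (c : Bool) :
    pre σ (Function.update b (t+1) c) (t+1) = {ω | σ (t+1) ω = c} ∩ pre σ b t := by
  ext ω
  simp only [pre, Set.mem_ofPred_eq, Set.mem_inter_iff]
  constructor
  · intro h
    refine ⟨by simpa using h (t+1) le_rfl, fun s hs => ?_⟩
    have := h s (by omega)
    rwa [Function.update_of_ne (by omega)] at this
  · rintro ⟨h1, h2⟩ s hs
    by_cases hst : s = t+1
    · subst hst; simpa using h1
    · rw [Function.update_of_ne hst]; exact h2 s (by omega)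

/-- The event that the exploration can proceed after time `n`. -/
def NFE {d : ℕ} {Ω : Type*} (emb : (Zd d × Zd d) ↪ ℕ) (σ : ℕ → Ω → Bool) (n : ℕ) : Set Ω :=
  {ω | NFS (explore emb (fun s => σ s ω) n)}

lemma measurableSet_nfe {d : ℕ} {Ω : Type*} [MeasurableSpace Ω] (emb : (Zd d × Zd d) ↪ ℕ)
    (σ : ℕ → Ω → Bool) (hσ : ∀ t, Measurable (σ t)) (n : ℕ) : MeasurableSet (NFE emb σ n) := by
  let ext : (Fin (n+1) → Bool) → ℕ → Bool := fun c s => if h : s < n+1 then c ⟨s, h⟩ else false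
  let r : Ω → (Fin (n+1) → Bool) := fun ω i => σ i ω
  have hr : Measurable r := measurable_pi_lambda _ fun i => hσ i
  have : NFE emb σ n = r ⁻¹' {c | NFS (explore emb (ext c) n)} := by
    ext ω
    simp only [NFE, Set.mem_ofPred_eq, Set.mem_preimage]
    rw [explore_congr emb n (ext (r ω)) (fun s => σ s ω)]
    intro s hs
    have hs' : s < n + 1 := by omega
    simp only [ext, r, dif_pos hs']
  rw [this]
  exact hr (Set.toFinite _).measurableSet

lemma main_step {d : ℕ} {Ω : Type*} [MeasurableSpace Ω] (P : Measure Ω)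
    (emb : (Zd d × Zd d) ↪ ℕ) (σ : ℕ → Ω → Bool) (hσ : ∀ t, Measurable (σ t))
    (p θ : ℝ≥0∞) (hp : p ≤ 1) (hpθ : p ≤ θ)
    (hcond : ∀ (t : ℕ) (b : ℕ → Bool),
      θ * P (pre σ b t) ≤ P ({ω | σ (t + 1) ω = true} ∩ pre σ b t)) (n : ℕ) :
    ∀ (t : ℕ) (b : ℕ → Bool),
      uval d p (explore emb b t) * P (pre σ b t) ≤ P (NFE emb σ (t + n) ∩ pre σ b t) := by
  have hprob := site_prob d hp
  have hzero : ∀ t b, ¬ NFS (explore emb b t) → uval d p (explore emb b t) = 0 := by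
    intro t b h
    rw [uval]
    convert measure_empty (μ := site d p)
    ext η
    simpa using force_frozen _ h (explore_zero_mem emb b t) η
  induction n with
  | zero =>
    intro t b
    by_cases h : NFS (explore emb b t)
    · have h1 : NFE emb σ (t + 0) ∩ pre σ b t = pre σ b t := by
        rw [Set.inter_eq_right]
        intro ω hω
        rw [NFE, Set.mem_ofPred_eq, add_zero, explore_congr emb t b _ hω]
        exact h
      rw [h1]
      calc _ ≤ 1 * P (pre σ b t) := by gcongr; exact prob_le_one
        _ = _ := one_mul _
    · rw [hzero t b h, zero_mul]; exact zero_le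
  | succ n ih =>
    intro t b
    by_cases h : NFS (explore emb b t)
    · obtain ⟨e, h1, h2, -, he⟩ := explore_succ_nf emb b t h
      have hT := ih (t+1) (Function.update b (t+1) true)
      have hF := ih (t+1) (Function.update b (t+1) false)
      rw [he _ (fun s hs => Function.update_of_ne (by omega) _ _), pre_update] at hT hF
      simp only [Function.update_self, if_true, Bool.false_eq_true, if_false] at hT hF
      rw [show t + 1 + n = t + (n + 1) by omega] at hT hF
      have hmT : MeasurableSet {ω | σ (t+1) ω = true} := hσ (t+1) (measurableSet_singleton true)
      have hsplit : ∀ A : Set Ω, P A = P ({ω | σ (t+1) ω = true} ∩ A)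
          + P ({ω | σ (t+1) ω = false} ∩ A) := by
        intro A
        rw [← measure_inter_add_sdiff A hmT, Set.inter_comm]
        congr 2
        ext ω
        simp [and_comm]
      calc uval d p (explore emb b t) * P (pre σ b t)
          ≤ _ * P (pre σ b t) := by
            gcongr
            exact uval_split d hp (explore emb b t).1 (explore emb b t).2 e h1 h2
        _ ≤ _ := ennreal_step hp hpθ (uval_mono d p _ _ e) (hsplit (pre σ b t)) (hcond t b)
        _ ≤ _ := add_le_add hT hF
        _ = _ := by
            rw [hsplit (NFE emb σ (t + (n + 1)) ∩ pre σ b t), Set.inter_left_comm,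
              Set.inter_left_comm (NFE emb σ (t + (n + 1)))]
    · rw [hzero t b h, zero_mul]; exact zero_le

theorem dynamic_renormalization_percolates {d : ℕ} (hd : 1 ≤ d)
    {Ω : Type*} [MeasurableSpace Ω] (P : Measure Ω) [IsProbabilityMeasure P]
    (emb : (Zd d × Zd d) ↪ ℕ)
    (σ : ℕ → Ω → Bool) (hσ : ∀ t, Measurable (σ t))
    (θ : ℝ≥0∞) (hθ1 : pcSite d < θ) (hθ2 : θ < 1)
    (h0 : θ ≤ P {ω | σ 0 ω = true})
    (hcond : ∀ (t : ℕ) (b : ℕ → Bool),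
      θ * P {ω | ∀ s ≤ t, σ s ω = b s} ≤
        P ({ω | σ (t + 1) ω = true} ∩ {ω | ∀ s ≤ t, σ s ω = b s})) :
    0 < P {ω | Set.Infinite (⋃ t, ((explore emb (fun s => σ s ω) t).1 : Set (Zd d)))} := by
  obtain ⟨p, hpmem, hpθ⟩ := sInf_lt_iff.1 hθ1
  have hp : p ≤ 1 := (hpθ.trans hθ2).le
  have hpos := site_infAt_zero d hp (hpmem _ (site_prob d hp) (site_bernoulli d hp))
  have hθpos : 0 < θ := lt_of_le_of_lt zero_le hpθ
  have hu : site d p (InfAt 0) ≤ uval d p ({0}, ∅) := by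
    refine measure_mono fun η hη => infAt_mono (fun z hz => ?_) hη
    simp [force, hz]
  have hbound : ∀ n, site d p (InfAt 0) * θ ≤ P (NFE emb σ n) := by
    intro n
    have h := main_step P emb σ hσ p θ hp hpθ.le hcond n 0 (fun _ => true)
    have h1 : explore emb (fun _ => true) 0 = ({0}, ∅) := by simp [explore]
    have h2 : pre σ (fun _ => true) 0 = {ω | σ 0 ω = true} := by
      ext ω; simp [pre]
    rw [h1, h2, zero_add] at h
    exact (mul_le_mul' hu h0).trans (h.trans (measure_mono Set.inter_subset_left))
  have hanti : Antitone (NFE emb σ) :=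
    antitone_nat_of_succ_le fun n ω hω => nfs_antitone emb _ n hω
  have hInter : P (⋂ n, NFE emb σ n) = ⨅ n, P (NFE emb σ n) :=
    hanti.measure_iInter (fun n => (measurableSet_nfe emb σ hσ n).nullMeasurableSet)
      ⟨0, measure_ne_top _ _⟩
  calc 0 < site d p (InfAt 0) * θ := ENNReal.mul_pos hpos.ne' hθpos.ne'
    _ ≤ P (⋂ n, NFE emb σ n) := by rw [hInter]; exact le_iInf hbound
    _ ≤ _ := measure_mono fun ω hω =>
      explore_infinite emb _ fun t => Set.mem_iInter.1 hω t

end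
end
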